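/- arXiv:2504.05123 — 5 statements merged into one kernel-verified Lean document; each statement's English description precedes it below -/
import Mathlib

section
/- Let n ≥ 1 and let σ be a cyclically alternating permutation of {1,…,2n}. Then for every cyclically alternating permutation τ of {1,…,2n} with E(σ) ⊆ vert(τ), one has inv(σ) ≤ inv(τ); moreover, if inv(τ) = inv(σ) then τ = σ. In other words, σ is the unique minimizer of the inversion number among all cyclically alternating permutations τ with E(σ) ⊆ vert(τ). -/
/-- The cyclic successor of an index/value in `Fin m` (i.e. `i + 1 mod m`). -/
def cyclicSucc {m : ℕ} (i : Fin m) : Fin m := ⟨((i : ℕ) + 1) % m, Nat.mod_lt _ i.pos⟩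

/-- `σ` (a permutation of `{0,…,2n−1}`, standing for `{1,…,2n}`) is cyclically
alternating: `σ_1 < σ_2 > σ_3 < ⋯ > σ_{2n−1} < σ_{2n} > σ_1` (0-indexed, with
indices taken cyclically). -/
def IsCAP {n : ℕ} (σ : Equiv.Perm (Fin (2 * n))) : Prop :=
  ∀ i : Fin (2 * n),
    (Even (i : ℕ) → σ i < σ (cyclicSucc i)) ∧ (Odd (i : ℕ) → σ (cyclicSucc i) < σ i)

/-- The cyclic swap set of `σ`: values `k` (with `k+1` also a value, i.e.
`k ∈ {1,…,2n−1}` in 1-indexed terms) such that `σ⁻¹(k) > σ⁻¹(k+1) + 1`. -/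
def CSwapSet {n : ℕ} (σ : Equiv.Perm (Fin (2 * n))) : Set (Fin (2 * n)) :=
  {k | (k : ℕ) + 1 < 2 * n ∧
    ((σ⁻¹ (cyclicSucc k) : Fin (2 * n)) : ℕ) + 1 < ((σ⁻¹ k : Fin (2 * n)) : ℕ)}

/-- The cyclic swap statistic `cswap(σ)`. -/
noncomputable def cswap {n : ℕ} (σ : Equiv.Perm (Fin (2 * n))) : ℕ := (CSwapSet σ).ncard

/-- The inversion number of `σ`: the number of pairs of positions `i < j`
with `σ_i > σ_j`. -/
noncomputable def inv {n : ℕ} (σ : Equiv.Perm (Fin (2 * n))) : ℕ :=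
  Set.ncard {p : Fin (2 * n) × Fin (2 * n) | p.1 < p.2 ∧ σ p.2 < σ p.1}

/-- The `0/1`-vector `v_k^σ`: the `j`-th coordinate is `1` iff the (1-indexed)
value `σ_j` exceeds `k`. -/
def vertexVec {n : ℕ} (σ : Equiv.Perm (Fin (2 * n))) (k : ℕ) : Fin (2 * n) → ℕ :=
  fun j => if k < (σ j : ℕ) + 1 then 1 else 0

/-- `vert(σ) = {v_0^σ, …, v_{2n}^σ}`. -/
def vert {n : ℕ} (σ : Equiv.Perm (Fin (2 * n))) : Set (Fin (2 * n) → ℕ) :=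
  {v | ∃ k ≤ 2 * n, v = vertexVec σ k}

/-- The CAP `σ` cyclically swaps to the CAP `τ`: `τ` is obtained from `σ` by
exchanging the values `i` and `i+1` for some `i` lying to the right of `i+1`
in `σ`. -/
def CSwapsTo {n : ℕ} (σ τ : Equiv.Perm (Fin (2 * n))) : Prop :=
  IsCAP σ ∧ IsCAP τ ∧ ∃ i : Fin (2 * n), (i : ℕ) + 1 < 2 * n ∧
    ((σ⁻¹ (cyclicSucc i) : Fin (2 * n)) : ℕ) < ((σ⁻¹ i : Fin (2 * n)) : ℕ) ∧
    τ = (Equiv.swap i (cyclicSucc i)) * σ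

/-- `E(σ)`: vertices of `σ` missing from some CAP that `σ` cyclically swaps to. -/
def ESet {n : ℕ} (σ : Equiv.Perm (Fin (2 * n))) : Set (Fin (2 * n) → ℕ) :=
  {v | v ∈ vert σ ∧ ∃ τ, CSwapsTo σ τ ∧ v ∉ vert τ}

/-!
The inversion set of `σ` is contained in that of `τ`. Let `p < q` with `σ q < σ p`. If `q = p + 1`,
alternation decides the order of the two values in the same way for `σ` and `τ`. If `p + 1 < q`,
raise the value from `σ q` to `σ p` one step at a time and look at the position where it occurs: it
starts to the right of `p + 1` and ends at `p`, so it crosses `p + 1` between some `k` and `k + 1`.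
Since `σ` has no double descent, this crossing is a jump by at least two positions, so exchanging
`k` and `k + 1` is a cyclic swap, and the vertex of `σ` it destroys is `1` at `p` and `0` at `q`.
This vertex belongs to `τ` as well, which forces `τ q < τ p`.
-/

section Order

variable {ι α : Type*}

theorem exists_covBy_and_not [PartialOrder α] [WellFoundedLT α] [IsStronglyCoatomic α]
    {P : α → Prop} {a b : α} (hab : a ≤ b) (ha : P a) (hb : ¬ P b) :
    ∃ x y, a ≤ x ∧ x ⋖ y ∧ y ≤ b ∧ P x ∧ ¬ P y := by
  obtain ⟨y, hyb, ⟨hay, hy⟩, hmin⟩ := exists_minimal_le_of_wellFoundedLT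
    (fun z => a ≤ z ∧ ¬ P z) b ⟨hab, hb⟩
  have hne : a ≠ y := by
    rintro rfl
    exact hy ha
  obtain ⟨x, hax, hxy⟩ := exists_le_covBy_of_lt (hay.lt_of_ne hne)
  refine ⟨x, y, hax, hxy, hyb, ?_, hy⟩
  by_contra hx
  exact hxy.lt.not_ge (hmin ⟨hax, hx⟩ hxy.le)

variable [LinearOrder α]

theorem swap_lt_swap_of_covBy {a b x y : α} (hab : a ⋖ b) (hxy : x < y)
    (hne : ¬ (x = a ∧ y = b)) : Equiv.swap a b x < Equiv.swap a b y := by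
  have hlt := hab.lt
  have hx : x < b → x ≤ a := hab.le_of_lt
  have hy : a < y → b ≤ y := hab.ge_of_gt
  simp only [Equiv.swap_apply_def]
  grind

variable [LinearOrder ι]

/-- The inversion set of `f`: the pairs of positions `i < j` at which the values of `f` appear in
the wrong order. For a permutation its cardinality is the inversion number. -/
def inversionSet (f : ι → α) : Set (ι × ι) :=
  {p | p.1 < p.2 ∧ f p.2 < f p.1}

theorem apply_lt_apply_iff_inversionSet {f : ι → α} (hf : f.Injective) {i j : ι} :
    f i < f j ↔ i < j ∧ (i, j) ∉ inversionSet f ∨ (j, i) ∈ inversionSet f := by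
  simp only [inversionSet, Set.mem_ofPred_eq]
  have := hf.eq_iff (a := i) (b := j)
  grind

theorem eq_of_inversionSet_eq [WellFoundedLT α] {f g : ι ≃ α}
    (h : inversionSet f = inversionSet g) : f = g := by
  have hlt (i j : ι) : f i < f j ↔ g i < g j := by
    rw [apply_lt_apply_iff_inversionSet f.injective, apply_lt_apply_iff_inversionSet g.injective, h]
  have hmono : StrictMono (g ∘ f.symm) := fun a b hab => (hlt _ _).1 (by simpa using hab)
  let e : α ≃o α := hmono.orderIsoOfSurjective _ (g.surjective.comp f.symm.surjective)
  have he : e = OrderIso.refl α := Subsingleton.elim _ _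
  ext i
  simpa [e] using (DFunLike.congr_fun he (f i)).symm

end Order

theorem val_cyclicSucc_of_lt {m : ℕ} {i : Fin m} (hi : (i : ℕ) + 1 < m) :
    (cyclicSucc i : ℕ) = i + 1 :=
  Nat.mod_eq_of_lt hi

theorem cyclicSucc_eq_of_covBy {m : ℕ} {i j : Fin m} (hij : i ⋖ j) : cyclicSucc i = j := by
  have hval : (i : ℕ) + 1 = j := by simpa using hij
  exact Fin.ext (by rw [val_cyclicSucc_of_lt (hval ▸ j.isLt), hval])

section CyclicallyAlternating

variable {n : ℕ} {σ τ : Equiv.Perm (Fin (2 * n))}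

theorem inv_eq_ncard_inversionSet (σ : Equiv.Perm (Fin (2 * n))) :
    inv σ = (inversionSet σ).ncard := rfl

theorem IsCAP.apply_cyclicSucc_lt_iff_odd (hσ : IsCAP σ) {i : Fin (2 * n)} :
    σ (cyclicSucc i) < σ i ↔ Odd (i : ℕ) := by
  refine ⟨fun hlt => ?_, (hσ i).2⟩
  rw [← Nat.not_even_iff_odd]
  exact fun heven => hlt.asymm ((hσ i).1 heven)

theorem mem_CSwapSet_iff {k : Fin (2 * n)} :
    k ∈ CSwapSet σ ↔ ∃ l, k ⋖ l ∧ (σ⁻¹ l : ℕ) + 1 < σ⁻¹ k := by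
  constructor
  · rintro ⟨hk, hpos⟩
    have hcov : k ⋖ ⟨k + 1, hk⟩ := by simp
    exact ⟨_, hcov, cyclicSucc_eq_of_covBy hcov ▸ hpos⟩
  · rintro ⟨l, hkl, hpos⟩
    have hval : (k : ℕ) + 1 = l := by simpa using hkl
    exact ⟨hval ▸ l.isLt, (cyclicSucc_eq_of_covBy hkl).symm ▸ hpos⟩

theorem IsCAP.swap_mul (hσ : IsCAP σ) {k l : Fin (2 * n)} (hkl : k ⋖ l)
    (hk : cyclicSucc (σ⁻¹ k) ≠ σ⁻¹ l) (hl : cyclicSucc (σ⁻¹ l) ≠ σ⁻¹ k) :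
    IsCAP (Equiv.swap k l * σ) := by
  refine fun i => ⟨fun heven => ?_, fun hodd => ?_⟩
  · refine swap_lt_swap_of_covBy hkl ((hσ i).1 heven) ?_
    rintro ⟨rfl, rfl⟩
    simp at hk
  · refine swap_lt_swap_of_covBy hkl ((hσ i).2 hodd) ?_
    rintro ⟨rfl, rfl⟩
    simp at hl

theorem IsCAP.cSwapsTo_swap_mul (hσ : IsCAP σ) {k l : Fin (2 * n)} (hkl : k ⋖ l)
    (hpos : (σ⁻¹ l : ℕ) + 1 < σ⁻¹ k) : CSwapsTo σ (Equiv.swap k l * σ) := by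
  have hval : (k : ℕ) + 1 = l := by simpa using hkl
  refine ⟨hσ, hσ.swap_mul hkl (fun hadj => ?_) (fun hadj => ?_), k, hval ▸ l.isLt, ?_, ?_⟩
  -- `k` and `l` can only be adjacent across the end of the word, which would put `k` at a peak.
  · have hlast : (σ⁻¹ k : ℕ) + 1 = 2 * n := by
      by_contra hne
      have hsucc := val_cyclicSucc_of_lt (i := σ⁻¹ k) (by omega)
      rw [hadj] at hsucc
      omega
    have hodd : Odd (σ⁻¹ k : ℕ) := ⟨n - 1, by omega⟩
    have hlk : l < k := by
      have hdesc := hσ.apply_cyclicSucc_lt_iff_odd.2 hodd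
      rw [hadj] at hdesc
      simpa using hdesc
    exact hlk.asymm hkl.lt
  · have hsucc := val_cyclicSucc_of_lt (i := σ⁻¹ l) (by omega)
    rw [hadj] at hsucc
    omega
  · rw [cyclicSucc_eq_of_covBy hkl]
    exact (Nat.lt_succ_self _).trans hpos
  · rw [cyclicSucc_eq_of_covBy hkl]

theorem lt_of_vertexVec_mem_vert {m : ℕ} (hm : vertexVec σ m ∈ vert τ) {p q : Fin (2 * n)}
    (hq : (σ q : ℕ) < m) (hp : m ≤ σ p) : τ q < τ p := by
  obtain ⟨r, -, hr⟩ := hm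
  have hrp : r ≤ τ p := by
    have := congrFun hr p
    simp only [vertexVec] at this
    split_ifs at this <;> omega
  have hrq : (τ q : ℕ) < r := by
    have := congrFun hr q
    simp only [vertexVec] at this
    split_ifs at this <;> omega
  exact Fin.lt_def.2 (hrq.trans_le hrp)

theorem IsCAP.vertexVec_mem_ESet (hσ : IsCAP σ) {k : Fin (2 * n)} (hk : k ∈ CSwapSet σ) :
    vertexVec σ (k + 1) ∈ ESet σ := by
  obtain ⟨l, hkl, hpos⟩ := mem_CSwapSet_iff.1 hk
  have hval : (k : ℕ) + 1 = l := by simpa using hkl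
  refine ⟨⟨k + 1, by omega, rfl⟩, _, hσ.cSwapsTo_swap_mul hkl hpos, fun hvert => ?_⟩
  have hlk : l < k := by
    simpa using lt_of_vertexVec_mem_vert hvert (q := σ⁻¹ k) (p := σ⁻¹ l) (by simp) (by simp [hval])
  exact hlk.asymm hkl.lt

theorem IsCAP.exists_mem_CSwapSet_of_apply_lt (hσ : IsCAP σ) {p q : Fin (2 * n)}
    (hpq : (p : ℕ) + 1 < q) (hlt : σ q < σ p) : ∃ k ∈ CSwapSet σ, σ q ≤ k ∧ k < σ p := by
  obtain ⟨k, l, hqk, hkl, hlp, hk, hl⟩ := exists_covBy_and_not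
    (P := fun v => (p : ℕ) + 1 < σ⁻¹ v) hlt.le (by simpa using hpq) (by simp)
  refine ⟨k, mem_CSwapSet_iff.2 ⟨l, hkl, ?_⟩, hqk, hkl.lt.trans_le hlp⟩
  rcases (not_lt.1 hl).lt_or_eq with hl_le | hl_succ
  · omega
  -- Otherwise `l` sits right after `p`, hence in a valley, and its right neighbour exceeds `l > k`.
  have hl_pos : σ⁻¹ l = cyclicSucc p := Fin.ext (by rw [hl_succ, val_cyclicSucc_of_lt (by omega)])
  have hl_apply : σ (cyclicSucc p) = l := by simp [← hl_pos]
  have hl_ne : l ≠ σ p := by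
    rintro rfl
    simp at hl_succ
  have hp_odd : Odd (p : ℕ) := hσ.apply_cyclicSucc_lt_iff_odd.1 (hl_apply ▸ hlp.lt_of_ne hl_ne)
  have hl_lt : l < σ (cyclicSucc (σ⁻¹ l)) := by
    simpa using (hσ (σ⁻¹ l)).1 (hl_succ ▸ hp_odd.add_one)
  have hk_ne : (σ⁻¹ k : ℕ) ≠ σ⁻¹ l + 1 := by
    intro hadj
    rw [cyclicSucc_eq_of_covBy (by simpa using hadj.symm : σ⁻¹ l ⋖ σ⁻¹ k)] at hl_lt
    exact hkl.lt.asymm (by simpa using hl_lt)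
  omega

theorem inversionSet_subset_of_ESet_subset_vert (hσ : IsCAP σ) (hτ : IsCAP τ)
    (hE : ESet σ ⊆ vert τ) : inversionSet σ ⊆ inversionSet τ := by
  rintro ⟨p, q⟩ ⟨hpq, hlt⟩
  refine ⟨hpq, ?_⟩
  by_cases hadj : p ⋖ q
  · obtain rfl := cyclicSucc_eq_of_covBy hadj
    rwa [hτ.apply_cyclicSucc_lt_iff_odd, ← hσ.apply_cyclicSucc_lt_iff_odd]
  · have hfar : (p : ℕ) + 1 < q :=
      lt_of_le_of_ne (Fin.lt_def.1 hpq) (by simpa using hadj)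
    obtain ⟨k, hk, hqk, hkp⟩ := hσ.exists_mem_CSwapSet_of_apply_lt hfar hlt
    exact lt_of_vertexVec_mem_vert (hE (hσ.vertexVec_mem_ESet hk)) (Nat.lt_succ_of_le hqk) hkp

end CyclicallyAlternating

/-- Propositions 5.7 and 5.8: a cyclically alternating permutation `σ` is the
unique minimizer of the inversion number among all cyclically alternating
permutations `τ` with `E(σ) ⊆ vert(τ)`. -/
theorem cap_unique_inversion_minimizer (n : ℕ) (hn : 1 ≤ n)
    (σ τ : Equiv.Perm (Fin (2 * n))) (hσ : IsCAP σ) (hτ : IsCAP τ)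
    (hE : ESet σ ⊆ vert τ) :
    inv σ ≤ inv τ ∧ (inv τ = inv σ → τ = σ) := by
  rw [inv_eq_ncard_inversionSet, inv_eq_ncard_inversionSet]
  have hsub := inversionSet_subset_of_ESet_subset_vert hσ hτ hE
  exact ⟨Set.ncard_le_ncard hsub, fun hcard =>
    (eq_of_inversionSet_eq (Set.eq_of_subset_of_ncard_le hsub hcard.le)).symm⟩
end

section
/- Let n ≥ 1. Then cswap(σ) ≤ 2n−2 for every cyclically alternating permutation σ of {1,…,2n}, and there exists a cyclically alternating permutation σ of {1,…,2n} with cswap(σ) = 2n−2; in particular, the permutation (n, 2n, n−1, 2n−1, …, 1, n+1) (i.e., σ_{2k−1} = n+1−k and σ_{2k} = 2n+1−k for 1 ≤ k ≤ n) is cyclically alternating and has cswap equal to 2n−2. -/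
/-!
Read a swap `k` at its position `p = σ⁻¹ k`: since `σ⁻¹ (k + 1) + 1 < p`, the `0`-indexed position
`p` is at least `2`. So the first two entries of a permutation, alternating or not, are never swaps,
which leaves at most `2n - 2` of them. The bound is attained when each entry is one less than the
entry two places before it, as in the shuffle of two decreasing runs; placing the lower half of the
values in the even positions makes this shuffle cyclically alternating.
-/

lemma cyclicSucc_eq_of_val_eq_add_one {m : ℕ} {i j : Fin m} (h : (j : ℕ) = i + 1) :
    cyclicSucc i = j :=
  Fin.ext ((congrArg (· % m) h.symm).trans (Nat.mod_eq_of_lt j.isLt))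

lemma even_cyclicSucc_iff {m : ℕ} (hm : Even m) (i : Fin m) :
    Even (cyclicSucc i : ℕ) ↔ ¬Even (i : ℕ) := by
  rw [cyclicSucc, hm.mod_even_iff, Nat.even_add_one]

lemma ncard_setOf_le_val (m k : ℕ) : {p : Fin m | k ≤ (p : ℕ)}.ncard = m - k := by
  have hcompl : {p : Fin m | k ≤ (p : ℕ)} = {p : Fin m | (p : ℕ) < k}ᶜ := by
    ext p
    exact (not_lt (α := ℕ)).symm
  rw [hcompl, Set.ncard_compl, Nat.card_fin, Set.ncard_eq_toFinset_card', Set.toFinset_ofPred,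
    Fin.card_filter_val_lt, tsub_min]

section CyclicSwaps

variable {n : ℕ} (σ : Equiv.Perm (Fin (2 * n)))

lemma CSwapSet_subset_image : CSwapSet σ ⊆ σ '' {p | 2 ≤ (p : ℕ)} := by
  rintro k ⟨-, hk⟩
  have two_le : 2 ≤ (σ⁻¹ k : ℕ) := by omega
  exact ⟨σ⁻¹ k, two_le, σ.apply_symm_apply k⟩

lemma cswap_add_two_le (hn : 1 ≤ n) : cswap σ + 2 ≤ 2 * n := by
  have hcard : cswap σ ≤ 2 * n - 2 := calc
    cswap σ ≤ (σ '' {p | 2 ≤ (p : ℕ)}).ncard := Set.ncard_le_ncard (CSwapSet_subset_image σ)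
    _ = 2 * n - 2 := by rw [Set.ncard_image_of_injective _ σ.injective, ncard_setOf_le_val]
  omega

variable {σ}

lemma mem_CSwapSet_of_val_eq_add_one {p q : Fin (2 * n)} (hval : (σ q : ℕ) = σ p + 1)
    (hpos : (q : ℕ) + 1 < p) : σ p ∈ CSwapSet σ := by
  refine ⟨hval ▸ (σ q).isLt, ?_⟩
  rwa [cyclicSucc_eq_of_val_eq_add_one hval, Equiv.Perm.inv_def, σ.symm_apply_apply,
    σ.symm_apply_apply]

lemma cswap_add_two_eq_of_val_eq_add_one (hn : 1 ≤ n)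
    (hσ : ∀ p q : Fin (2 * n), (p : ℕ) = q + 2 → (σ q : ℕ) = σ p + 1) :
    cswap σ + 2 = 2 * n := by
  have himage : CSwapSet σ = σ '' {p | 2 ≤ (p : ℕ)} := by
    refine (CSwapSet_subset_image σ).antisymm ?_
    rintro _ ⟨p, two_le : 2 ≤ (p : ℕ), rfl⟩
    let q : Fin (2 * n) := ⟨p - 2, by omega⟩
    have hpq : (p : ℕ) = q + 2 := (Nat.sub_add_cancel two_le).symm
    exact mem_CSwapSet_of_val_eq_add_one (hσ p q hpq) (by omega)
  rw [cswap, himage, Set.ncard_image_of_injective _ σ.injective, ncard_setOf_le_val]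
  omega

lemma IsCAP.of_val_lt_iff_even {c : ℕ} (hσ : ∀ p, (σ p : ℕ) < c ↔ Even (p : ℕ)) : IsCAP σ := by
  intro i
  have hsucc : (σ (cyclicSucc i) : ℕ) < c ↔ ¬Even (i : ℕ) :=
    (hσ _).trans (even_cyclicSucc_iff (even_two_mul n) i)
  refine ⟨fun heven ↦ ?_, fun hodd ↦ ?_⟩
  · exact Fin.lt_def.2 (((hσ i).2 heven).trans_le (not_lt.1 fun h ↦ hsucc.1 h heven))
  · have hnot : ¬Even (i : ℕ) := Nat.not_even_iff_odd.2 hodd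
    exact Fin.lt_def.2 ((hsucc.2 hnot).trans_le (not_lt.1 fun h ↦ hnot ((hσ i).1 h)))

end CyclicSwaps

/-- The shuffle `(n, 2n, n−1, 2n−1, …, 1, n+1)` of the decreasing runs `n, …, 1` and `2n, …, n+1`,
which attains the maximum of `cswap`. Positions and values are `0`-indexed, so the run `n−1, …, 0`
occupies the even positions. -/
def descShuffle (n : ℕ) : Equiv.Perm (Fin (2 * n)) where
  toFun p := ⟨if Even (p : ℕ) then n - (p : ℕ) / 2 - 1 else 2 * n - ((p : ℕ) + 1) / 2, by grind⟩
  invFun v := ⟨if (v : ℕ) < n then 2 * (n - 1 - v) else 2 * (2 * n - v) - 1, by grind⟩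
  left_inv p := by grind
  right_inv v := by grind

lemma descShuffle_val (n : ℕ) (p : Fin (2 * n)) : (descShuffle n p : ℕ) =
    if Even (p : ℕ) then n - (p : ℕ) / 2 - 1 else 2 * n - ((p : ℕ) + 1) / 2 :=
  rfl

lemma descShuffle_val_lt_iff_even (n : ℕ) (p : Fin (2 * n)) :
    (descShuffle n p : ℕ) < n ↔ Even (p : ℕ) := by
  rw [descShuffle_val]
  split_ifs with h
  · exact iff_of_true (by omega) h
  · exact iff_of_false (by omega) h

lemma descShuffle_val_eq_add_one {n : ℕ} {p q : Fin (2 * n)} (h : (p : ℕ) = q + 2) :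
    (descShuffle n q : ℕ) = descShuffle n p + 1 := by
  have hparity : Even (p : ℕ) ↔ Even (q : ℕ) := by rw [h, Nat.even_add, iff_true_right even_two]
  simp only [descShuffle_val, hparity]
  split_ifs <;> omega

theorem cswap_max_general (n : ℕ) (hn : 1 ≤ n) :
    (∀ σ : Equiv.Perm (Fin (2 * n)), cswap σ ≤ 2 * n - 2) ∧
      ∃ σ : Equiv.Perm (Fin (2 * n)),
        (∀ p : Fin (2 * n), (σ p : ℕ) =
          if Even (p : ℕ) then n - (p : ℕ) / 2 - 1 else 2 * n - ((p : ℕ) + 1) / 2) ∧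
        IsCAP σ ∧ cswap σ = 2 * n - 2 := by
  refine ⟨fun σ ↦ Nat.le_sub_of_add_le (cswap_add_two_le σ hn), descShuffle n,
    descShuffle_val n, IsCAP.of_val_lt_iff_even (descShuffle_val_lt_iff_even n), ?_⟩
  exact Nat.eq_sub_of_add_eq <|
    cswap_add_two_eq_of_val_eq_add_one hn fun _ _ ↦ descShuffle_val_eq_add_one

/-- Corollary 5.14: `cswap(σ) ≤ 2n−2` for every cyclically alternating
permutation `σ` of `{1,…,2n}`, and the permutation
`(n, 2n, n−1, 2n−1, …, 1, n+1)` is cyclically alternating with `cswap = 2n−2`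
(values written `0`-indexed). -/
theorem cswap_max (n : ℕ) (hn : 1 ≤ n) :
    (∀ σ : Equiv.Perm (Fin (2 * n)), IsCAP σ → cswap σ ≤ 2 * n - 2) ∧
      ∃ σ : Equiv.Perm (Fin (2 * n)),
        (∀ p : Fin (2 * n), (σ p : ℕ) =
          if Even (p : ℕ) then n - (p : ℕ) / 2 - 1 else 2 * n - ((p : ℕ) + 1) / 2) ∧
        IsCAP σ ∧ cswap σ = 2 * n - 2 :=
  ⟨fun σ _ ↦ (cswap_max_general n hn).1 σ, (cswap_max_general n hn).2⟩
end

section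
/- Let n ≥ 1 and for 0 ≤ j ≤ 2n−2 set h_j = #{σ ∈ CA_{2n} : cswap(σ) = j}. Then the sequence (h_0, h_1, …, h_{2n−2}) is symmetric and unimodal: h_j = h_{2n−2−j} for all 0 ≤ j ≤ 2n−2, and h_j ≤ h_{j+1} for all 0 ≤ j < n−1. -/
/-!
Cyclically alternating permutations are the inverses of the linear extensions of the crown poset,
and for the natural labelling `0, 2, 1, 4, 3, …, 2n - 1` of the crown the statistic `cswap` counts
descents. The distribution of descents over linear extensions is the same for all natural
labellings, so all minimal elements may be given smaller labels than all maximal ones. A linear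
extension then splits into maximal blocks of minimal and maximal elements, in turn, with a descent
at exactly those junctions where a block of maximal elements ends. Inside a block the letters are
unordered, so each block contributes an Eulerian polynomial, which is `γ`-positive. The first block
consists of minimal and the last of maximal elements, so there is an even number `2r` of blocks, and
these contribute `X ^ (r - 1)` times `2r` Eulerian polynomials of total degree `2n - 2r`. All
contributions are therefore `γ`-positive with the same centre `n - 1`. Multiplying the descent
polynomial by `X` moves the centre to `n` and avoids truncated subtraction.
-/

open Polynomial Finset

/-- The cone of `γ`-positive polynomials with centre of symmetry `d / 2`. -/
noncomputable def gammaCone (d : ℕ) : AddSubmonoid ℕ[X] :=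
  AddSubmonoid.closure {p | ∃ i k, 2 * i + k = d ∧ p = X ^ i * (1 + X) ^ k}

section GammaCone

variable {d e : ℕ} {p q : ℕ[X]}

lemma X_pow_mul_one_add_X_pow_mem_gammaCone (i k : ℕ) :
    X ^ i * (1 + X) ^ k ∈ gammaCone (2 * i + k) :=
  AddSubmonoid.subset_closure ⟨i, k, rfl, rfl⟩

lemma one_mem_gammaCone : 1 ∈ gammaCone 0 := by
  simpa using X_pow_mul_one_add_X_pow_mem_gammaCone 0 0

lemma X_mem_gammaCone : X ∈ gammaCone 2 := by
  simpa using X_pow_mul_one_add_X_pow_mem_gammaCone 1 0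

lemma one_add_X_mem_gammaCone : 1 + X ∈ gammaCone 1 := by
  simpa using X_pow_mul_one_add_X_pow_mem_gammaCone 0 1

open scoped Pointwise in
lemma mul_mem_gammaCone (hp : p ∈ gammaCone d) (hq : q ∈ gammaCone e) :
    p * q ∈ gammaCone (d + e) := by
  suffices gammaCone d * gammaCone e ≤ gammaCone (d + e) from
    this (AddSubmonoid.mul_mem_mul hp hq)
  rw [gammaCone, gammaCone, AddSubmonoid.closure_mul_closure, AddSubmonoid.closure_le]
  rintro _ ⟨_, ⟨i, k, rfl, rfl⟩, _, ⟨j, l, rfl, rfl⟩, rfl⟩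
  exact AddSubmonoid.subset_closure ⟨i + j, k + l, by ring, by ring⟩

lemma coeff_X_pow_mul_one_add_X_pow (i k j : ℕ) :
    (X ^ i * (1 + X) ^ k : ℕ[X]).coeff j = if i ≤ j then k.choose (j - i) else 0 := by
  rw [coeff_X_pow_mul']
  simp [coeff_one_add_X_pow]

lemma coeff_eq_coeff_of_mem_gammaCone (hp : p ∈ gammaCone d) {i j : ℕ} (hij : i + j = d) :
    p.coeff i = p.coeff j := by
  induction hp using AddSubmonoid.closure_induction with
  | mem p hp =>
    obtain ⟨a, k, rfl, rfl⟩ := hp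
    simp only [coeff_X_pow_mul_one_add_X_pow]
    by_cases hi : a ≤ i <;> by_cases hj : a ≤ j <;> simp only [hi, hj, if_true, if_false]
    · exact Nat.choose_symm_of_eq_add (by omega)
    · exact Nat.choose_eq_zero_of_lt (by omega)
    · exact (Nat.choose_eq_zero_of_lt (by omega)).symm
  | zero => simp
  | add p q _ _ hp hq => rw [coeff_add, coeff_add, hp, hq]

lemma coeff_le_coeff_succ_of_mem_gammaCone (hp : p ∈ gammaCone d) {j : ℕ} (hj : 2 * j + 1 ≤ d) :
    p.coeff j ≤ p.coeff (j + 1) := by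
  induction hp using AddSubmonoid.closure_induction with
  | mem p hp =>
    obtain ⟨i, k, rfl, rfl⟩ := hp
    simp only [coeff_X_pow_mul_one_add_X_pow]
    by_cases hi : i ≤ j
    · rw [if_pos hi, if_pos (by omega), Nat.sub_add_comm hi]
      obtain hk | hk := Nat.lt_or_ge (j - i) (k / 2)
      · exact Nat.choose_le_succ_of_lt_half_left hk
      · exact (Nat.choose_symm_of_eq_add (by omega)).le
    · simp [hi]
  | zero => simp
  | add p q _ _ hp hq => simpa only [coeff_add] using add_le_add hp hq

end GammaCone

section Descents

variable {α α' β β' : Type*} [LinearOrder α] [LinearOrder α']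

/-- The number of descents of the word `l`, its letters being compared through their labels `ω`. -/
def descentCount (ω : β → α) : List β → ℕ
  | [] => 0
  | [_] => 0
  | a :: b :: l => (if ω b < ω a then 1 else 0) + descentCount ω (b :: l)

lemma descentCount_map (ω : β' → α) (f : β → β') (l : List β) :
    descentCount ω (l.map f) = descentCount (ω ∘ f) l := by
  induction l with
  | nil => rfl
  | cons a l ih => cases l <;> simp_all [descentCount]

lemma descentCount_congr {ω : β → α} {ω' : β → α'} {l : List β}
    (h : l.IsChain fun a b ↦ (ω b < ω a ↔ ω' b < ω' a)) :
    descentCount ω l = descentCount ω' l := by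
  induction l with
  | nil => rfl
  | cons a l ih => cases l <;> simp_all [descentCount]

lemma descentCount_append (ω : β → α) {e : ℕ} {u v : List β} (hu : u ≠ []) (hv : v ≠ [])
    (he : ∀ a ∈ u, ∀ b ∈ v.head?, (if ω b < ω a then 1 else 0) = e) :
    descentCount ω (u ++ v) = descentCount ω u + e + descentCount ω v := by
  induction u with
  | nil => contradiction
  | cons a u ih =>
    cases u with
    | nil => cases v <;> simp_all [descentCount]
    | cons b u =>
      simp only [List.cons_append, descentCount] at ih ⊢
      rw [ih (by simp) fun c hc ↦ he c (List.mem_cons_of_mem _ hc)]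
      ring

lemma descentCount_ofFn (ω : β → α) {m : ℕ} (f : Fin (m + 1) → β) :
    descentCount ω (List.ofFn f) = #{i : Fin m | ω (f i.succ) < ω (f i.castSucc)} := by
  rw [card_filter]
  induction m with
  | zero => rfl
  | succ m ih =>
    rw [List.ofFn_succ, List.ofFn_succ, descentCount, ← List.ofFn_succ (f := fun i ↦ f i.succ), ih,
      Fin.sum_univ_succ]
    rfl

/-- The generating polynomial of the descent count over the words in `L`. -/
noncomputable def descentPoly (ω : β → α) (L : Finset (List β)) : ℕ[X] :=
  ∑ l ∈ L, X ^ descentCount ω l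

lemma descentPoly_congr {ω : β → α} {ω' : β → α'} {L : Finset (List β)}
    (h : ∀ a b, ω b < ω a ↔ ω' b < ω' a) : descentPoly ω L = descentPoly ω' L := by
  refine sum_congr rfl fun l _ ↦ congrArg (X ^ ·) (descentCount_congr ?_)
  exact List.isChain_iff_forall_rel_of_append_cons_cons.2 fun a b _ _ _ ↦ h a b

lemma descentPoly_singleton (ω : β → α) (l : List β) :
    descentPoly ω {l} = X ^ descentCount ω l :=
  sum_singleton ..

lemma coeff_descentPoly (ω : β → α) (L : Finset (List β)) (j : ℕ) :
    (descentPoly ω L).coeff j = #{l ∈ L | descentCount ω l = j} := by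
  simp [descentPoly, coeff_X_pow, eq_comm]

end Descents

section LinearExtensions

variable {β : Type*} {R : β → β → Prop} {p : β → Prop} {s U : Finset β}
  {u v l : List β}
  {α : Type*} [LinearOrder α] {ω : β → α}

lemma takeWhile_append_of_head? [DecidablePred p] (hu : ∀ a ∈ u, p a)
    (hv : ∀ a ∈ v.head?, ¬ p a) : (u ++ v).takeWhile p = u := by
  rw [List.takeWhile_append_of_pos (by simpa using hu)]
  cases v <;> simp_all

lemma dropWhile_append_of_head? [DecidablePred p] (hu : ∀ a ∈ u, p a)
    (hv : ∀ a ∈ v.head?, ¬ p a) : (u ++ v).dropWhile p = v := by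
  rw [List.dropWhile_append_of_pos (by simpa using hu)]
  cases v <;> simp_all

lemma not_of_mem_head?_dropWhile [DecidablePred p] : ∀ a ∈ (l.dropWhile p).head?, ¬ p a := by
  intro a ha
  have := List.head?_dropWhile_not (p ·) l
  rw [Option.mem_def.1 ha] at this
  simpa using this

open Classical in
/-- The words listing each element of `s` exactly once in which no letter is `R`-below an earlier
one. For `R = ⊥` these are all the orderings of `s`. -/
noncomputable def linearExtensions (R : β → β → Prop) (s : Finset β) : Finset (List β) :=
  {l ∈ (⟨s.val.lists, Multiset.lists_nodup_finset s⟩ : Finset (List β)) |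
    l.Pairwise fun a b ↦ ¬ R b a}

open Classical in
/-- The linear extensions of `R` on `s` that are empty or start with a letter satisfying `p`. -/
noncomputable def linearExtensionsFrom (R : β → β → Prop) (p : β → Prop) (s : Finset β) :
    Finset (List β) :=
  {l ∈ linearExtensions R s | ∀ a ∈ l.head?, p a}

lemma mem_linearExtensions :
    l ∈ linearExtensions R s ↔
      l.Nodup ∧ (∀ a, a ∈ l ↔ a ∈ s) ∧ l.Pairwise fun a b ↦ ¬ R b a := by
  have mem_lists : l ∈ s.val.lists ↔ l.Nodup ∧ ∀ a, a ∈ l ↔ a ∈ s := by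
    rw [Multiset.mem_lists_iff]
    refine ⟨fun h ↦ ?_, fun ⟨hl, h⟩ ↦ ?_⟩
    · exact ⟨Multiset.coe_nodup.1 (by have := s.nodup; rwa [h] at this), fun a ↦ by
        rw [← mem_val, h]; rfl⟩
    · exact (Multiset.Nodup.ext s.nodup (Multiset.coe_nodup.2 hl)).2 fun a ↦ (h a).symm
  simp [linearExtensions, mem_lists, and_assoc]

lemma mem_linearExtensionsFrom :
    l ∈ linearExtensionsFrom R p s ↔ l ∈ linearExtensions R s ∧ ∀ a ∈ l.head?, p a := by
  simp only [linearExtensionsFrom, mem_filter]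

lemma linearExtensions_empty : linearExtensions R ∅ = {[]} := by
  ext l
  simp only [mem_linearExtensions, notMem_empty, iff_false, ← List.eq_nil_iff_forall_not_mem,
    mem_singleton]
  exact ⟨fun h ↦ h.2.1, by rintro rfl; simp⟩

lemma linearExtensionsFrom_empty : linearExtensionsFrom R p ∅ = {[]} := by
  ext l
  rw [mem_linearExtensionsFrom, linearExtensions_empty, mem_singleton, and_iff_left_iff_imp]
  rintro rfl
  simp

lemma ne_nil_of_mem_linearExtensions (hs : s.Nonempty) (hl : l ∈ linearExtensions R s) :
    l ≠ [] := by
  rintro rfl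
  obtain ⟨a, ha⟩ := hs
  simpa using ((mem_linearExtensions.1 hl).2.1 a).2 ha

lemma linearExtensions_eq_bot (hR : ∀ a ∈ s, ∀ b ∈ s, ¬ R a b) :
    linearExtensions R s = linearExtensions ⊥ s := by
  ext l
  simp only [mem_linearExtensions]
  refine and_congr_right fun _ ↦ and_congr_right fun hl ↦ ?_
  refine List.Pairwise.iff_of_mem fun ha hb ↦ ?_
  simp [hR _ ((hl _).1 hb) _ ((hl _).1 ha)]

lemma linearExtensions_bot_singleton (a : β) : linearExtensions ⊥ {a} = {[a]} := by
  ext l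
  simp only [mem_linearExtensions, mem_singleton]
  refine ⟨fun ⟨hl, h, _⟩ ↦ ?_, by rintro rfl; simp⟩
  exact List.perm_singleton.1 ((List.perm_ext_iff_of_nodup hl (by simp)).2 (by simpa using h))

lemma descentPoly_linearExtensions_bot_singleton (a : β) :
    descentPoly ω (linearExtensions ⊥ {a}) = 1 := by
  rw [linearExtensions_bot_singleton, descentPoly_singleton, descentCount, pow_zero]

lemma descentPoly_linearExtensionsFrom_empty :
    descentPoly ω (linearExtensionsFrom R p ∅) = 1 := by
  rw [linearExtensionsFrom_empty, descentPoly_singleton, descentCount, pow_zero]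

lemma descentPoly_linearExtensionsFrom_add_not (hs : s.Nonempty) :
    descentPoly ω (linearExtensionsFrom R p s) + descentPoly ω (linearExtensionsFrom R (¬ p ·) s) =
      descentPoly ω (linearExtensions R s) := by
  classical
  have h_not : linearExtensionsFrom R (¬ p ·) s =
      {l ∈ linearExtensions R s | ¬ ∀ a ∈ l.head?, p a} := by
    ext l
    simp only [mem_linearExtensionsFrom, mem_filter]
    refine and_congr_right fun hl ↦ ?_
    obtain ⟨a, l, rfl⟩ := List.exists_cons_of_ne_nil (ne_nil_of_mem_linearExtensions hs hl)
    simp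
  rw [h_not, linearExtensionsFrom, descentPoly, descentPoly, descentPoly]
  convert sum_filter_add_sum_filter_not _ _ _

variable [DecidableEq β]

open Classical in
/-- The possible letter sets of the maximal nonempty prefix with letters in `p` of a linear
extension of `R` on `s`: the nonempty lower sets of `s` contained in `p`. -/
noncomputable def initialBlocks (R : β → β → Prop) (p : β → Prop) (s : Finset β) :
    Finset (Finset β) :=
  {U ∈ s.powerset | U.Nonempty ∧ ∀ a ∈ U, p a ∧ ∀ b ∈ s \ U, ¬ R b a}

lemma mem_initialBlocks :
    U ∈ initialBlocks R p s ↔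
      U ⊆ s ∧ U.Nonempty ∧ ∀ a ∈ U, p a ∧ ∀ b ∈ s \ U, ¬ R b a := by
  simp only [initialBlocks, mem_filter, mem_powerset]

lemma append_mem_linearExtensions (hUs : U ⊆ s) (hU : ∀ a ∈ U, ∀ b ∈ s \ U, ¬ R b a)
    (hu : u ∈ linearExtensions R U) (hv : v ∈ linearExtensions R (s \ U)) :
    u ++ v ∈ linearExtensions R s := by
  rw [mem_linearExtensions] at *
  obtain ⟨hu, huU, hRu⟩ := hu
  obtain ⟨hv, hvU, hRv⟩ := hv
  refine ⟨hu.append hv fun a ha hb ↦ ?_, fun a ↦ ?_, List.pairwise_append.2 ⟨hRu, hRv, ?_⟩⟩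
  · exact (mem_sdiff.1 ((hvU a).1 hb)).2 ((huU a).1 ha)
  · rw [List.mem_append, huU, hvU, ← mem_union, union_sdiff_of_subset hUs]
  · exact fun a ha b hb ↦ hU a ((huU a).1 ha) b ((hvU b).1 hb)

lemma append_mem_linearExtensions_iff :
    u ++ v ∈ linearExtensions R s ↔
      u.toFinset ⊆ s ∧ (∀ a ∈ u, ∀ b ∈ s \ u.toFinset, ¬ R b a) ∧
        u ∈ linearExtensions R u.toFinset ∧ v ∈ linearExtensions R (s \ u.toFinset) := by
  refine ⟨fun h ↦ ?_, fun ⟨hus, hR, hu, hv⟩ ↦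
    append_mem_linearExtensions hus (by simpa using hR) hu hv⟩
  obtain ⟨hnodup, hmem, hpair⟩ := mem_linearExtensions.1 h
  obtain ⟨hu, hv, hdisj⟩ := List.nodup_append'.1 hnodup
  obtain ⟨hRu, hRv, hRuv⟩ := List.pairwise_append.1 hpair
  have mem_v (a : β) : a ∈ v ↔ a ∈ s \ u.toFinset := by
    have := @hdisj a
    simp only [mem_sdiff, ← hmem, List.mem_append, List.mem_toFinset]
    tauto
  refine ⟨fun a ha ↦ (hmem a).1 (List.mem_append_left v (List.mem_toFinset.1 ha)),
    fun a ha b hb ↦ hRuv a ha b ((mem_v b).2 hb), ?_, ?_⟩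
  · exact mem_linearExtensions.2 ⟨hu, fun a ↦ List.mem_toFinset.symm, hRu⟩
  · exact mem_linearExtensions.2 ⟨hv, mem_v, hRv⟩

lemma append_mem_linearExtensionsFrom (hU : U ∈ initialBlocks R p s)
    (hu : u ∈ linearExtensions R U) (hv : v ∈ linearExtensions R (s \ U)) :
    u ++ v ∈ linearExtensionsFrom R p s := by
  obtain ⟨hUs, hU, hpU⟩ := mem_initialBlocks.1 hU
  obtain ⟨a, u, rfl⟩ := List.exists_cons_of_ne_nil (ne_nil_of_mem_linearExtensions hU hu)
  have ha : a ∈ U := ((mem_linearExtensions.1 hu).2.1 a).1 List.mem_cons_self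
  refine mem_linearExtensionsFrom.2
    ⟨append_mem_linearExtensions hUs (fun a ha ↦ (hpU a ha).2) hu hv, ?_⟩
  simpa using (hpU a ha).1

lemma sum_linearExtensionsFrom {M : Type*} [AddCommMonoid M] (hs : s.Nonempty) (g : List β → M) :
    ∑ l ∈ linearExtensionsFrom R p s, g l =
      ∑ U ∈ initialBlocks R p s, ∑ u ∈ linearExtensions R U,
        ∑ v ∈ linearExtensionsFrom R (¬ p ·) (s \ U), g (u ++ v) := by
  classical
  simp_rw [← sum_product', sum_sigma']
  refine (sum_nbij' (fun x ↦ x.2.1 ++ x.2.2)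
    (fun l ↦ ⟨(l.takeWhile p).toFinset, l.takeWhile p, l.dropWhile p⟩) ?_ ?_ ?_ ?_ ?_).symm
  · rintro ⟨U, u, v⟩ h
    simp only [mem_sigma, mem_product] at h
    exact append_mem_linearExtensionsFrom h.1 h.2.1 (mem_linearExtensionsFrom.1 h.2.2).1
  · intro l hl
    rw [mem_linearExtensionsFrom] at hl
    obtain ⟨a, l', rfl⟩ := List.exists_cons_of_ne_nil (ne_nil_of_mem_linearExtensions hs hl.1)
    have ha : p a := hl.2 a (by simp)
    have hsplit := hl.1
    rw [← List.takeWhile_append_dropWhile (p := (p ·)) (l := a :: l'),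
      append_mem_linearExtensions_iff] at hsplit
    obtain ⟨hsub, hlow, hu, hv⟩ := hsplit
    simp only [mem_sigma, mem_product, mem_initialBlocks, mem_linearExtensionsFrom]
    refine ⟨⟨hsub, ⟨a, by simp [ha]⟩, fun b hb ↦ ?_⟩, hu, hv, not_of_mem_head?_dropWhile⟩
    rw [List.mem_toFinset] at hb
    exact ⟨by simpa using List.mem_takeWhile_imp hb, hlow b hb⟩
  · rintro ⟨U, u, v⟩ h
    simp only [mem_sigma, mem_product, mem_initialBlocks, mem_linearExtensionsFrom] at h
    obtain ⟨⟨-, -, hpU⟩, hu, -, hv⟩ := h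
    have mem_u := (mem_linearExtensions.1 hu).2.1
    have hpu : ∀ a ∈ u, p a := fun a ha ↦ (hpU a ((mem_u a).1 ha)).1
    have hUu : u.toFinset = U := by ext a; rw [List.mem_toFinset, mem_u]
    simp only [takeWhile_append_of_head? hpu hv, dropWhile_append_of_head? hpu hv, hUu]
  · intro l _
    exact List.takeWhile_append_dropWhile
  · intro _ _
    rfl

lemma descentCount_append_of_block {e : ℕ} (hU : U ∈ initialBlocks R p s)
    (he : ∀ a ∈ s, ∀ b ∈ s, p a → ¬ p b → (if ω b < ω a then 1 else 0) = e)
    (hu : u ∈ linearExtensions R U) (hv : v ∈ linearExtensionsFrom R (¬ p ·) (s \ U)) :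
    descentCount ω (u ++ v) =
      descentCount ω u + (if (s \ U).Nonempty then e else 0) + descentCount ω v := by
  obtain ⟨hUs, hU, hpU⟩ := mem_initialBlocks.1 hU
  obtain ⟨hv, hpv⟩ := mem_linearExtensionsFrom.1 hv
  split_ifs with hsU
  · refine descentCount_append ω (ne_nil_of_mem_linearExtensions hU hu)
      (ne_nil_of_mem_linearExtensions hsU hv) fun a ha b hb ↦ ?_
    have ha := ((mem_linearExtensions.1 hu).2.1 a).1 ha
    have hb' := ((mem_linearExtensions.1 hv).2.1 b).1 (List.mem_of_mem_head? hb)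
    exact he a (hUs ha) b (mem_sdiff.1 hb').1 (hpU a ha).1 (hpv b hb)
  · rw [not_nonempty_iff_eq_empty.1 hsU, linearExtensions_empty, mem_singleton] at hv
    simp [hv, descentCount]

lemma descentPoly_linearExtensionsFrom {e : ℕ} (hs : s.Nonempty)
    (hR : ∀ a ∈ s, ∀ b ∈ s, p a → p b → ¬ R a b)
    (he : ∀ a ∈ s, ∀ b ∈ s, p a → ¬ p b → (if ω b < ω a then 1 else 0) = e) :
    descentPoly ω (linearExtensionsFrom R p s) =
      ∑ U ∈ initialBlocks R p s, descentPoly ω (linearExtensions ⊥ U) *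
        (X ^ (if (s \ U).Nonempty then e else 0) *
          descentPoly ω (linearExtensionsFrom R (¬ p ·) (s \ U))) := by
  rw [descentPoly, sum_linearExtensionsFrom hs]
  refine sum_congr rfl fun U hU ↦ ?_
  have ⟨hUs, _, hpU⟩ := mem_initialBlocks.1 hU
  rw [← linearExtensions_eq_bot fun a ha b hb ↦ hR a (hUs ha) b (hUs hb) (hpU a ha).1 (hpU b hb).1,
    descentPoly, descentPoly, mul_sum, sum_mul_sum]
  refine sum_congr rfl fun u hu ↦ sum_congr rfl fun v hv ↦ ?_
  rw [descentCount_append_of_block hU he hu hv, pow_add, pow_add, mul_assoc]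

section Eulerian

variable {m : β} {B : Finset β}

lemma initialBlocks_bot_eq (hm : m ∈ s) : initialBlocks ⊥ (· = m) s = {{m}} := by
  ext U
  simp only [mem_initialBlocks, mem_singleton]
  refine ⟨fun ⟨_, hU, h⟩ ↦ ?_, by rintro rfl; simp [hm]⟩
  exact eq_singleton_iff_nonempty_unique_mem.2 ⟨hU, fun a ha ↦ (h a ha).1⟩

lemma initialBlocks_bot_ne : initialBlocks ⊥ (· ≠ m) s = (s.erase m).powerset.erase ∅ := by
  ext U
  have h_mem : (∀ a ∈ U, a ≠ m) ↔ m ∉ U :=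
    ⟨fun h hm ↦ h m hm rfl, fun h a ha ↦ ne_of_mem_of_not_mem ha h⟩
  simp only [mem_initialBlocks, mem_erase, mem_powerset, subset_erase, nonempty_iff_ne_empty,
    Pi.bot_apply, Prop.bot_eq_false, not_false_iff, implies_true, and_true, h_mem]
  tauto

lemma descentPoly_linearExtensionsFrom_eq_insert (hm : ∀ a ∈ B, ω a < ω m) :
    descentPoly ω (linearExtensionsFrom ⊥ (· = m) (insert m B)) =
      X ^ (if B.Nonempty then 1 else 0) * descentPoly ω (linearExtensions ⊥ B) := by
  have h_notMem : m ∉ B := fun h ↦ (hm m h).false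
  have h_tail : linearExtensionsFrom ⊥ (¬ · = m) B = linearExtensions ⊥ B := by
    ext l
    simp only [mem_linearExtensionsFrom, and_iff_left_iff_imp]
    rintro hl m hml rfl
    exact h_notMem (((mem_linearExtensions.1 hl).2.1 m).1 (List.mem_of_mem_head? hml))
  rw [descentPoly_linearExtensionsFrom (e := 1) (insert_nonempty m B) (by simp),
    initialBlocks_bot_eq (mem_insert_self m B), sum_singleton, sdiff_singleton_eq_erase,
    erase_insert h_notMem, h_tail, descentPoly_linearExtensions_bot_singleton, one_mul]
  rintro a - b hb rfl hba
  rw [if_pos (hm b (mem_of_mem_insert_of_ne hb hba))]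

lemma descentPoly_linearExtensionsFrom_ne_insert (hm : ∀ a ∈ B, ω a < ω m) :
    descentPoly ω (linearExtensionsFrom ⊥ (· ≠ m) (insert m B)) =
      ∑ U ∈ B.powerset.erase ∅, descentPoly ω (linearExtensions ⊥ U) *
        (X ^ (if (B \ U).Nonempty then 1 else 0) *
          descentPoly ω (linearExtensions ⊥ (B \ U))) := by
  have h_notMem : m ∉ B := fun h ↦ (hm m h).false
  rw [descentPoly_linearExtensionsFrom (e := 0) (insert_nonempty m B) (by simp),
    initialBlocks_bot_ne, erase_insert h_notMem]
  · refine sum_congr rfl fun U hU ↦ ?_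
    have hUB : U ⊆ B := mem_powerset.1 (mem_of_mem_erase hU)
    simp only [ite_self, pow_zero, one_mul, not_ne_iff]
    rw [insert_sdiff_of_notMem _ (notMem_mono hUB h_notMem),
      descentPoly_linearExtensionsFrom_eq_insert fun a ha ↦ hm a (mem_sdiff.1 ha).1]
  · rintro a ha b _ ham hbm
    obtain rfl := not_not.1 hbm
    rw [if_neg (hm a (mem_of_mem_insert_of_ne ha ham)).not_gt]

lemma descentPoly_linearExtensions_bot_insert (hB : B.Nonempty) (hm : ∀ a ∈ B, ω a < ω m) :
    descentPoly ω (linearExtensions ⊥ (insert m B)) =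
      (1 + X) * descentPoly ω (linearExtensions ⊥ B) +
        ∑ U ∈ (B.powerset.erase ∅).erase B, descentPoly ω (linearExtensions ⊥ U) *
          (X * descentPoly ω (linearExtensions ⊥ (B \ U))) := by
  have hB_mem : B ∈ B.powerset.erase ∅ := mem_erase.2 ⟨hB.ne_empty, mem_powerset_self B⟩
  rw [← descentPoly_linearExtensionsFrom_add_not (p := (· = m)) (insert_nonempty m B),
    descentPoly_linearExtensionsFrom_eq_insert hm, descentPoly_linearExtensionsFrom_ne_insert hm,
    ← add_sum_erase _ _ hB_mem, ← add_assoc]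
  refine congrArg₂ (· + ·) ?_ (sum_congr rfl fun U hU ↦ ?_)
  · rw [if_pos hB, sdiff_self, bot_eq_empty, if_neg Finset.not_nonempty_empty,
      linearExtensions_empty, descentPoly_singleton, descentCount, pow_zero]
    ring
  · simp only [mem_erase, mem_powerset] at hU
    rw [if_pos (sdiff_nonempty.2 fun h ↦ hU.1 (hU.2.2.antisymm h)), pow_one]

/- Cutting the orderings at their largest letter gives `A (B ∪ {m})` as the sum of
`(1 + X) * A B`, with `m` at an end, and of the `A U * X * A V` with `B = U ⊔ V`. -/
omit [DecidableEq β] in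
theorem descentPoly_linearExtensions_bot_mem_gammaCone (hω : ω.Injective) (hs : s.Nonempty) :
    descentPoly ω (linearExtensions ⊥ s) ∈ gammaCone (#s - 1) := by
  classical
  induction s using Finset.strongInduction with
  | H s ih =>
    obtain ⟨m, hm, hle⟩ := s.exists_max_image ω hs
    obtain ⟨B, hmB, rfl⟩ : ∃ B, m ∉ B ∧ insert m B = s :=
      ⟨s.erase m, notMem_erase m s, insert_erase hm⟩
    have hlt : ∀ a ∈ B, ω a < ω m := fun a ha ↦
      (hle a (mem_insert_of_mem ha)).lt_of_ne (hω.ne (ne_of_mem_of_not_mem ha hmB))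
    rw [card_insert_of_notMem hmB, Nat.add_sub_cancel]
    obtain rfl | hB := B.eq_empty_or_nonempty
    · simpa [descentPoly_linearExtensions_bot_singleton] using one_mem_gammaCone
    have mem_of_subset {U : Finset β} (hU : U.Nonempty) (hUB : U ⊆ B) :=
      ih U (hUB.trans_ssubset (ssubset_insert hmB)) hU
    rw [descentPoly_linearExtensions_bot_insert hB hlt]
    refine add_mem ?_ (sum_mem fun U hU ↦ ?_)
    · have := mul_mem_gammaCone one_add_X_mem_gammaCone (mem_of_subset hB Subset.rfl)
      rwa [Nat.add_sub_cancel' hB.card_pos] at this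
    · simp only [mem_erase, mem_powerset, ← nonempty_iff_ne_empty] at hU
      obtain ⟨hUB, hU, hU_sub⟩ := hU
      have hV : (B \ U).Nonempty := sdiff_nonempty.2 fun h ↦ hUB (hU_sub.antisymm h)
      convert mul_mem_gammaCone (mem_of_subset hU hU_sub)
        (mul_mem_gammaCone X_mem_gammaCone (mem_of_subset hV sdiff_subset)) using 2
      have := card_sdiff_add_card_eq_card hU_sub
      have := hU.card_pos
      have := hV.card_pos
      omega

end Eulerian

end LinearExtensions

/-- `R` is the strict order of a poset of height two without isolated points, whose minimal
elements are those satisfying `low`. -/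
structure IsTwoLevel {β : Type*} (R : β → β → Prop) (low : β → Prop) : Prop where
  low_of_rel {a b : β} : R a b → low a
  not_low_of_rel {a b : β} : R a b → ¬ low b
  exists_rel_of_low {a : β} : low a → ∃ b, R a b
  exists_rel_of_not_low {b : β} : ¬ low b → ∃ a, R a b

namespace IsTwoLevel

variable {α β : Type*} [LinearOrder α] {ω : β → α} {R : β → β → Prop} {low : β → Prop}
  {s U : Finset β}

lemma exists_rel_of_mem_sdiff [DecidableEq β] {p : β → Prop}
    (hs : ∀ a ∈ s, low a → ∃ b ∈ s, R a b) (hU : U ∈ initialBlocks R p s) :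
    ∀ a ∈ s \ U, low a → ∃ b ∈ s \ U, R a b := by
  intro a ha hlow
  obtain ⟨b, hb, hab⟩ := hs a (mem_sdiff.1 ha).1 hlow
  exact ⟨b, mem_sdiff.2 ⟨hb, fun hbU ↦ ((mem_initialBlocks.1 hU).2.2 b hbU).2 a ha hab⟩, hab⟩

lemma descentPoly_linearExtensionsFrom_low [DecidableEq β] (h : IsTwoLevel R low)
    (hω : ∀ a b, low a → ¬ low b → ω a < ω b) (hs₀ : s.Nonempty) :
    descentPoly ω (linearExtensionsFrom R low s) =
      ∑ U ∈ initialBlocks R low s, descentPoly ω (linearExtensions ⊥ U) *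
        descentPoly ω (linearExtensionsFrom R (¬ low ·) (s \ U)) := by
  rw [descentPoly_linearExtensionsFrom (e := 0) hs₀]
  · simp
  · exact fun a _ b _ _ hb hab ↦ h.not_low_of_rel hab hb
  · exact fun a _ b _ ha hb ↦ if_neg (hω a b ha hb).not_gt

lemma descentPoly_linearExtensionsFrom_not_low [DecidableEq β] (h : IsTwoLevel R low)
    (hω : ∀ a b, low a → ¬ low b → ω a < ω b) (hs₀ : s.Nonempty) :
    descentPoly ω (linearExtensionsFrom R (¬ low ·) s) =
      ∑ U ∈ initialBlocks R (¬ low ·) s, descentPoly ω (linearExtensions ⊥ U) *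
        (X ^ (if (s \ U).Nonempty then 1 else 0) *
          descentPoly ω (linearExtensionsFrom R low (s \ U))) := by
  rw [descentPoly_linearExtensionsFrom (e := 1) hs₀]
  · simp only [not_not]
  · exact fun a _ b _ ha _ hab ↦ ha (h.low_of_rel hab)
  · exact fun a _ b _ ha hb ↦ if_pos (hω b a (not_not.1 hb) ha)

theorem descentPoly_linearExtensionsFrom_mem_gammaCone (h : IsTwoLevel R low)
    (hω : ω.Injective) (hlt : ∀ a b, low a → ¬ low b → ω a < ω b)
    (hs : ∀ a ∈ s, low a → ∃ b ∈ s, R a b) (hs₀ : s.Nonempty) :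
    X * descentPoly ω (linearExtensionsFrom R low s) ∈ gammaCone #s ∧
      descentPoly ω (linearExtensionsFrom R (¬ low ·) s) ∈ gammaCone (#s - 1) := by
  classical
  induction s using Finset.strongInduction with
  | H s ih =>
    have ih_sdiff {p : β → Prop} {U : Finset β} (hU : U ∈ initialBlocks R p s)
        (hV : (s \ U).Nonempty) :=
      have ⟨hUs, hU₀, _⟩ := mem_initialBlocks.1 hU
      ih (s \ U) (sdiff_ssubset hUs hU₀) (exists_rel_of_mem_sdiff hs hU) hV
    have block_mem {p : β → Prop} {U : Finset β} (hU : U ∈ initialBlocks R p s) :=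
      descentPoly_linearExtensions_bot_mem_gammaCone hω (mem_initialBlocks.1 hU).2.1
    rw [descentPoly_linearExtensionsFrom_low h hlt hs₀,
      descentPoly_linearExtensionsFrom_not_low h hlt hs₀, mul_sum]
    refine ⟨sum_mem fun U hU ↦ ?_, sum_mem fun U hU ↦ ?_⟩
    all_goals
      obtain ⟨hUs, hU₀, hpU⟩ := mem_initialBlocks.1 hU
      have := card_sdiff_add_card_eq_card hUs
      have := hU₀.card_pos
    · obtain ⟨a, ha⟩ := hU₀
      obtain ⟨b, hb, hab⟩ := hs a (hUs ha) (hpU a ha).1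
      have hV : (s \ U).Nonempty :=
        ⟨b, mem_sdiff.2 ⟨hb, fun hbU ↦ h.not_low_of_rel hab (hpU b hbU).1⟩⟩
      convert mul_mem_gammaCone X_mem_gammaCone
        (mul_mem_gammaCone (block_mem hU) (ih_sdiff hU hV).2) using 2
      have := hV.card_pos
      omega
    · obtain hV | hV := (s \ U).eq_empty_or_nonempty
      · obtain rfl : U = s := hUs.antisymm (sdiff_eq_empty_iff_subset.1 hV)
        simpa [hV, descentPoly_linearExtensionsFrom_empty] using block_mem hU
      · rw [if_pos hV, pow_one]
        convert mul_mem_gammaCone (block_mem hU) (ih_sdiff hU hV).1 using 2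
        omega

lemma linearExtensions_univ [Fintype β] (h : IsTwoLevel R low) :
    linearExtensions R univ = linearExtensionsFrom R low univ := by
  ext l
  rw [mem_linearExtensionsFrom, iff_self_and]
  intro hl b hb
  by_contra hlow
  obtain ⟨a, hab⟩ := h.exists_rel_of_not_low hlow
  cases l with
  | nil => simp at hb
  | cons c l =>
    obtain rfl : c = b := by simpa using hb
    obtain ⟨_, hmem, hR⟩ := mem_linearExtensions.1 hl
    have ha : a ∈ c :: l := (hmem a).2 (mem_univ a)
    rcases List.mem_cons.1 ha with rfl | ha
    · exact hlow (h.low_of_rel hab)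
    · exact (List.pairwise_cons.1 hR).1 a ha hab

end IsTwoLevel

section Relabelling

variable {α α' β : Type*} [LinearOrder α] [LinearOrder α'] {R : β → β → Prop} {s : Finset β}
  {x y : β} {l : List β}

section Swap

variable [DecidableEq β]

/-- Exchanges the letters `x` and `y` of the word `l` if they are adjacent in it. This matches the
linear extensions under two labellings that differ by exchanging the labels of `x` and `y`. -/
def swapIfAdjacent (x y : β) (l : List β) : List β :=
  if [x, y] <:+: l ∨ [y, x] <:+: l then l.map (Equiv.swap x y) else l

lemma infix_map_swap_iff : [x, y] <:+: l.map (Equiv.swap x y) ↔ [y, x] <:+: l := by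
  refine ⟨fun h ↦ ?_, fun h ↦ by simpa using h.map (Equiv.swap x y)⟩
  simpa [List.map_map, ← Equiv.coe_trans] using h.map (Equiv.swap x y)

lemma swapIfAdjacent_swapIfAdjacent : swapIfAdjacent x y (swapIfAdjacent x y l) = l := by
  by_cases h : [x, y] <:+: l ∨ [y, x] <:+: l
  · have h' : [x, y] <:+: l.map (Equiv.swap x y) ∨ [y, x] <:+: l.map (Equiv.swap x y) := by
      rw [infix_map_swap_iff, Equiv.swap_comm, infix_map_swap_iff]
      exact h.symm
    rw [swapIfAdjacent, swapIfAdjacent, if_pos h, if_pos h', List.map_map]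
    simp [← Equiv.coe_trans]
  · rw [swapIfAdjacent, swapIfAdjacent, if_neg h, if_neg h]

lemma map_swap_mem_linearExtensions (hxy : ¬ R x y) (hl : l ∈ linearExtensions R s)
    (h : [x, y] <:+: l) : l.map (Equiv.swap x y) ∈ linearExtensions R s := by
  obtain ⟨u, v, rfl⟩ := h
  rw [mem_linearExtensions] at hl ⊢
  simp only [List.append_assoc, List.cons_append, List.nil_append] at hl ⊢
  obtain ⟨hnodup, hmem, hR⟩ := hl
  have h_perm : (u ++ y :: x :: v).Perm (u ++ x :: y :: v) := .append_left u (.swap ..)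
  have h_map : (u ++ x :: y :: v).map (Equiv.swap x y) = u ++ y :: x :: v := by
    have h_fix {w : List β} (hw : ∀ a ∈ w, a ≠ x ∧ a ≠ y) : w.map (Equiv.swap x y) = w :=
      List.map_congr_left (fun a ha ↦ Equiv.swap_apply_of_ne_of_ne (hw a ha).1 (hw a ha).2)
        |>.trans w.map_id
    rw [List.map_append, List.map_cons, List.map_cons, Equiv.swap_apply_left,
      Equiv.swap_apply_right, h_fix (by grind), h_fix (by grind)]
  rw [h_map]
  refine ⟨h_perm.nodup_iff.2 hnodup, fun a ↦ h_perm.mem_iff.trans (hmem a), ?_⟩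
  simp only [List.pairwise_append, List.pairwise_cons, List.mem_cons, forall_eq_or_imp] at hR ⊢
  grind

lemma swapIfAdjacent_mem_linearExtensions (hxy : ¬ R x y) (hyx : ¬ R y x)
    (hl : l ∈ linearExtensions R s) : swapIfAdjacent x y l ∈ linearExtensions R s := by
  rw [swapIfAdjacent]
  split_ifs with h
  · obtain h | h := h
    · exact map_swap_mem_linearExtensions hxy hl h
    · exact Equiv.swap_comm x y ▸ map_swap_mem_linearExtensions hyx hl h
  · exact hl

lemma swap_trans_lt_iff {ω : β ≃ α} (hxy : ω x ⋖ ω y) {a b : β} (h : ¬ (a = x ∧ b = y))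
    (h' : ¬ (a = y ∧ b = x)) :
    (Equiv.swap x y).trans ω a < (Equiv.swap x y).trans ω b ↔ ω a < ω b := by
  have lt_iff {c : β} (hx : c ≠ x) : ω c < ω x ↔ ω c < ω y :=
    ⟨hxy.lt.trans', fun h ↦ (hxy.le_of_lt h).lt_of_ne (ω.injective.ne hx)⟩
  have gt_iff {c : β} (hy : c ≠ y) : ω y < ω c ↔ ω x < ω c :=
    ⟨hxy.lt.trans, fun h ↦ (hxy.ge_of_gt h).lt_of_ne' (ω.injective.ne hy)⟩
  simp only [Equiv.trans_apply, Equiv.swap_apply_def]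
  grind

lemma descentCount_swapIfAdjacent {ω : β ≃ α} (hxy : ω x ⋖ ω y) :
    descentCount ((Equiv.swap x y).trans ω) (swapIfAdjacent x y l) = descentCount ω l := by
  rw [swapIfAdjacent]
  split_ifs with h
  · rw [descentCount_map]
    congr 1
    ext a
    simp
  · rw [not_or] at h
    refine descentCount_congr
      (List.isChain_iff_forall_rel_of_append_cons_cons.2 fun a b u v huv ↦ ?_)
    have h_infix : [a, b] <:+: l := ⟨u, v, by simp [huv]⟩
    refine swap_trans_lt_iff hxy ?_ ?_
    · rintro ⟨rfl, rfl⟩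
      exact h.2 h_infix
    · rintro ⟨rfl, rfl⟩
      exact h.1 h_infix

lemma descentPoly_swap_trans {ω : β ≃ α} (hxy : ω x ⋖ ω y) (hR : ¬ R x y) (hR' : ¬ R y x) :
    descentPoly ((Equiv.swap x y).trans ω) (linearExtensions R s) =
      descentPoly ω (linearExtensions R s) := by
  refine (sum_nbij' (swapIfAdjacent x y) (swapIfAdjacent x y)
    (fun _ ↦ swapIfAdjacent_mem_linearExtensions hR hR')
    (fun _ ↦ swapIfAdjacent_mem_linearExtensions hR hR')
    (fun _ _ ↦ swapIfAdjacent_swapIfAdjacent) (fun _ _ ↦ swapIfAdjacent_swapIfAdjacent)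
    fun l _ ↦ ?_).symm
  rw [descentCount_swapIfAdjacent hxy]

end Swap

/- Bubble sort: while `τ` is not increasing along `ω`, exchanging two consecutive `ω`-labels which
`τ` inverts does not change the polynomial; naturality makes their carriers incomparable. -/
lemma descentPoly_equiv_eq_descentPoly [Finite β] [WellFoundedLT α'] {τ : β → α'}
    (hτ : τ.Injective) (hτR : ∀ a b, R a b → τ a < τ b) (ω : β ≃ α)
    (hωR : ∀ a b, R a b → ω a < ω b) :
    descentPoly ω (linearExtensions R s) = descentPoly τ (linearExtensions R s) := by
  classical
  have : Finite α := .of_equiv β ω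
  have := Fintype.ofFinite α
  let := Fintype.toLocallyFiniteOrder (α := α)
  induction h : toLex (τ ∘ ω.symm) using WellFoundedLT.induction generalizing ω with
  | ind f ih =>
  by_cases hmono : StrictMono (τ ∘ ω.symm)
  · refine descentPoly_congr fun a b ↦ ?_
    simpa using (hmono.lt_iff_lt (a := ω b) (b := ω a)).symm
  rw [strictMono_iff_forall_covBy] at hmono
  push Not at hmono
  obtain ⟨i, j, hij, hle⟩ := hmono
  obtain ⟨x, rfl⟩ := ω.surjective i
  obtain ⟨y, rfl⟩ := ω.surjective j
  have hτ_lt : τ y < τ x := by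
    refine lt_of_le_of_ne (by simpa using hle) (hτ.ne ?_)
    rintro rfl
    exact hij.ne rfl
  have hR : ¬ R x y := fun h ↦ (hτR x y h).not_gt hτ_lt
  have hR' : ¬ R y x := fun h ↦ (hωR y x h).not_gt hij.lt
  rw [← descentPoly_swap_trans hij hR hR']
  refine ih _ ?_ ((Equiv.swap x y).trans ω) (fun a b hab ↦ ?_) rfl
  · have h_symm : τ ∘ ((Equiv.swap x y).trans ω).symm =
        (τ ∘ ω.symm) ∘ Equiv.swap (ω x) (ω y) := by
      ext c
      obtain ⟨a, rfl⟩ := ω.surjective c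
      simp [ω.injective.swap_apply]
    rw [← h, h_symm]
    exact Pi.lex_desc hij.le (by simpa using hτ_lt)
  · refine (swap_trans_lt_iff hij ?_ ?_).2 (hωR a b hab)
    · rintro ⟨rfl, rfl⟩
      exact hR hab
    · rintro ⟨rfl, rfl⟩
      exact hR' hab

theorem descentPoly_eq_descentPoly_of_natural [Finite β] {ω : β → α} {τ : β → α'}
    (hω : ω.Injective) (hωR : ∀ a b, R a b → ω a < ω b)
    (hτ : τ.Injective) (hτR : ∀ a b, R a b → τ a < τ b) :
    descentPoly ω (linearExtensions R s) = descentPoly τ (linearExtensions R s) := by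
  calc descentPoly ω (linearExtensions R s)
    _ = descentPoly (Equiv.ofInjective ω hω) (linearExtensions R s) :=
      descentPoly_congr fun _ _ ↦ Iff.rfl
    _ = descentPoly (Set.rangeFactorization τ) (linearExtensions R s) :=
      descentPoly_equiv_eq_descentPoly (Set.rangeFactorization_injective.2 hτ) hτR _ hωR
    _ = descentPoly τ (linearExtensions R s) := descentPoly_congr fun _ _ ↦ Iff.rfl

end Relabelling

theorem IsTwoLevel.descentPoly_linearExtensions_univ_mem_gammaCone {α β : Type*} [LinearOrder α]
    [Fintype β] [Nonempty β] {R : β → β → Prop} {low : β → Prop} {ω : β → α}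
    (h : IsTwoLevel R low) (hω : ω.Injective) (hωR : ∀ a b, R a b → ω a < ω b) :
    X * descentPoly ω (linearExtensions R univ) ∈ gammaCone (Fintype.card β) := by
  classical
  let τ (a : β) : Bool ×ₗ α := toLex (decide (¬ low a), ω a)
  have hτ_low (a b : β) (ha : low a) (hb : ¬ low b) : τ a < τ b := by
    simp [τ, Prod.Lex.toLex_lt_toLex, ha, hb]
  have hτ : τ.Injective := fun a b hab ↦ hω (congrArg (fun c ↦ (ofLex c).2) hab)
  have hτR (a b : β) (hab : R a b) : τ a < τ b :=
    hτ_low a b (h.low_of_rel hab) (h.not_low_of_rel hab)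
  rw [descentPoly_eq_descentPoly_of_natural hω hωR hτ hτR, h.linearExtensions_univ]
  exact (h.descentPoly_linearExtensionsFrom_mem_gammaCone hτ hτ_low
    (fun a _ ha ↦ by simpa using h.exists_rel_of_low ha) univ_nonempty).1

section Equiv

variable {α β : Type*} [LinearOrder α] [Fintype β] {R : β → β → Prop} {N : ℕ}

lemma ofFn_symm_mem_linearExtensions_univ (hR : ∀ a, ¬ R a a) (σ : β ≃ Fin N) :
    List.ofFn σ.symm ∈ linearExtensions R univ ↔ ∀ a b, R a b → σ a < σ b := by
  simp only [mem_linearExtensions, List.nodup_ofFn.2 σ.symm.injective, List.mem_ofFn,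
    σ.symm.surjective _, mem_univ, implies_true, true_and, List.pairwise_ofFn]
  refine ⟨fun h a b hab ↦ ?_, fun h i j hij hR ↦ ?_⟩
  · by_contra! hle
    obtain hlt | heq := hle.lt_or_eq
    · exact h hlt (by simpa using hab)
    · exact hR a (by simpa [σ.injective heq] using hab)
  · exact hij.not_gt (by simpa using h _ _ hR)

lemma exists_ofFn_symm_eq (hN : Fintype.card β = N) {l : List β}
    (hl : l ∈ linearExtensions R univ) : ∃ σ : β ≃ Fin N, List.ofFn σ.symm = l := by
  classical
  obtain ⟨hnodup, hmem, -⟩ := mem_linearExtensions.1 hl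
  let e := hnodup.getEquivOfForallMemList l fun a ↦ (hmem a).2 (mem_univ a)
  obtain rfl : l.length = N := by rw [← hN, Fintype.card_congr e.symm, Fintype.card_fin]
  exact ⟨e.symm, List.ofFn_get l⟩

lemma coeff_descentPoly_linearExtensions_univ (hR : ∀ a, ¬ R a a) (hN : Fintype.card β = N)
    (ω : β → α) (j : ℕ) :
    (descentPoly ω (linearExtensions R univ)).coeff j =
      {σ : β ≃ Fin N | (∀ a b, R a b → σ a < σ b) ∧
        descentCount ω (List.ofFn σ.symm) = j}.ncard := by
  have h_inj : (fun σ : β ≃ Fin N ↦ List.ofFn σ.symm).Injective := fun σ τ h ↦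
    Equiv.symm_bijective.injective (DFunLike.coe_injective (List.ofFn_injective h))
  rw [coeff_descentPoly, ← Set.ncard_image_of_injective _ h_inj, ← Set.ncard_coe_finset]
  congr 1
  ext l
  simp only [coe_filter, Set.mem_ofPred_eq, Set.mem_image,
    ← ofFn_symm_mem_linearExtensions_univ hR]
  constructor
  · rintro ⟨hl, rfl⟩
    obtain ⟨σ, rfl⟩ := exists_ofFn_symm_eq hN hl
    exact ⟨σ, ⟨hl, rfl⟩, rfl⟩
  · rintro ⟨σ, h, rfl⟩
    exact h

end Equiv

section Crown

variable {n : ℕ} {a b : Fin (2 * n)}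

lemma val_cyclicSucc {m : ℕ} (i : Fin m) :
    (cyclicSucc i : ℕ) = if (i : ℕ) + 1 < m then (i : ℕ) + 1 else 0 := by
  have := i.isLt
  split_ifs with h
  · exact Nat.mod_eq_of_lt h
  · simp [cyclicSucc, show (i : ℕ) + 1 = m by omega]

lemma even_cyclicSucc_iff_s15 : Even (cyclicSucc a : ℕ) ↔ ¬ Even (a : ℕ) := by
  rw [val_cyclicSucc]
  split_ifs with h
  · exact Nat.even_add_one
  · rw [← Nat.even_add_one, show (a : ℕ) + 1 = 2 * n by omega]
    simp

/-- The strict order of the crown poset on `Fin (2 * n)`, whose linear extensions are the cyclically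
alternating permutations: each even element lies below its two cyclic neighbours. -/
def crownRel (a b : Fin (2 * n)) : Prop :=
  (Even (a : ℕ) ∧ b = cyclicSucc a) ∨ (Odd (b : ℕ) ∧ a = cyclicSucc b)

lemma isCAP_iff {σ : Equiv.Perm (Fin (2 * n))} :
    IsCAP σ ↔ ∀ a b, crownRel a b → σ a < σ b := by
  constructor
  · rintro h a b (⟨ha, rfl⟩ | ⟨hb, rfl⟩)
    · exact (h a).1 ha
    · exact (h b).2 hb
  · exact fun h i ↦ ⟨fun hi ↦ h _ _ (.inl ⟨hi, rfl⟩), fun hi ↦ h _ _ (.inr ⟨hi, rfl⟩)⟩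

lemma isTwoLevel_crownRel : IsTwoLevel (crownRel (n := n)) fun a ↦ Even (a : ℕ) where
  low_of_rel := by
    rintro a b (⟨ha, rfl⟩ | ⟨hb, rfl⟩)
    · exact ha
    · rwa [even_cyclicSucc_iff_s15, Nat.not_even_iff_odd]
  not_low_of_rel := by
    rintro a b (⟨ha, rfl⟩ | ⟨hb, rfl⟩)
    · rwa [even_cyclicSucc_iff_s15, not_not]
    · rwa [Nat.not_even_iff_odd]
  exists_rel_of_low {a} ha := ⟨cyclicSucc a, .inl ⟨ha, rfl⟩⟩
  exists_rel_of_not_low {b} hb := ⟨cyclicSucc b, .inr ⟨Nat.not_even_iff_odd.1 hb, rfl⟩⟩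

/-- The labelling of the crown which orders it as `0, 2, 1, 4, 3, …, 2n - 1`. It is natural, and
`b` gets a smaller label than `a` exactly if `b + 1 < a`, unless `b` lies below `a`. -/
def crownLabel (a : Fin (2 * n)) : ℕ := if Even (a : ℕ) then 2 * a else 2 * a + 3

lemma crownLabel_injective : (crownLabel (n := n)).Injective := by
  intro a b h
  simp only [crownLabel] at h
  grind

lemma crownLabel_lt_of_crownRel (h : crownRel a b) : crownLabel a < crownLabel b := by
  have ha := isTwoLevel_crownRel.low_of_rel h
  have hb := isTwoLevel_crownRel.not_low_of_rel h
  rw [crownLabel, crownLabel, if_pos ha, if_neg hb]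
  obtain ⟨-, rfl⟩ | ⟨-, rfl⟩ := h
  · have := val_cyclicSucc a
    grind
  · have := val_cyclicSucc b
    grind

lemma not_crownRel_self : ¬ crownRel a a := fun h ↦ (crownLabel_lt_of_crownRel h).false

lemma crownLabel_lt_iff_of_not_crownRel (h : ¬ crownRel b a) :
    crownLabel b < crownLabel a ↔ (b : ℕ) + 1 < a := by
  have h_succ : Even (b : ℕ) → (a : ℕ) ≠ b + 1 := fun hb hab ↦
    h (.inl ⟨hb, Fin.ext (by rw [val_cyclicSucc]; grind)⟩)
  have h_pred : Odd (a : ℕ) → (b : ℕ) ≠ a + 1 := fun ha hab ↦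
    h (.inr ⟨ha, Fin.ext (by rw [val_cyclicSucc]; grind)⟩)
  simp only [crownLabel]
  grind

lemma descentCount_ofFn_eq_ncard {α β : Type*} [LinearOrder α] (ω : β → α) {N : ℕ}
    (f : Fin N → β) :
    descentCount ω (List.ofFn f) =
      {k : Fin N | (k : ℕ) + 1 < N ∧ ω (f (cyclicSucc k)) < ω (f k)}.ncard := by
  cases N with
  | zero => simp [descentCount]
  | succ m =>
    have h_succ (i : Fin m) : cyclicSucc i.castSucc = i.succ :=
      Fin.ext (by simp [val_cyclicSucc])
    rw [descentCount_ofFn, ← Set.ncard_coe_finset,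
      ← Set.ncard_image_of_injective _ (Fin.castSucc_injective m)]
    congr 1
    ext k
    cases k using Fin.lastCases with
    | last => simp
    | cast i => simp [h_succ]

lemma descentCount_crownLabel_eq_cswap {σ : Equiv.Perm (Fin (2 * n))} (hσ : IsCAP σ) :
    descentCount crownLabel (List.ofFn σ.symm) = cswap σ := by
  rw [descentCount_ofFn_eq_ncard, cswap, CSwapSet]
  congr 1
  ext k
  refine and_congr_right fun hk ↦ crownLabel_lt_iff_of_not_crownRel fun h ↦ ?_
  have := isCAP_iff.1 hσ _ _ h
  simp [Fin.lt_def, val_cyclicSucc, hk] at this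

lemma coeff_descentPoly_crownLabel (j : ℕ) :
    (descentPoly crownLabel (linearExtensions (crownRel (n := n)) univ)).coeff j =
      {σ : Equiv.Perm (Fin (2 * n)) | IsCAP σ ∧ cswap σ = j}.ncard := by
  rw [coeff_descentPoly_linearExtensions_univ (fun _ ↦ not_crownRel_self) (Fintype.card_fin _)]
  congr 1
  ext σ
  simp only [Set.mem_ofPred_eq, ← isCAP_iff]
  exact and_congr_right fun hσ ↦ by rw [descentCount_crownLabel_eq_cswap hσ]

end Crown

/-- Corollary 5.19: the coefficients `h_j = #{σ ∈ CA_{2n} : cswap(σ) = j}` of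
the `h^*`-polynomial of `O(C_{2n})` form a symmetric and unimodal sequence. -/
theorem cswap_distribution_symmetric_unimodal (n : ℕ) (hn : 1 ≤ n) :
    (∀ j ≤ 2 * n - 2,
        {σ : Equiv.Perm (Fin (2 * n)) | IsCAP σ ∧ cswap σ = j}.ncard
          = {σ : Equiv.Perm (Fin (2 * n)) | IsCAP σ ∧ cswap σ = 2 * n - 2 - j}.ncard) ∧
      ∀ j, j + 1 ≤ n - 1 →
        {σ : Equiv.Perm (Fin (2 * n)) | IsCAP σ ∧ cswap σ = j}.ncard
          ≤ {σ : Equiv.Perm (Fin (2 * n)) | IsCAP σ ∧ cswap σ = j + 1}.ncard := by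
  have : NeZero (2 * n) := ⟨by omega⟩
  have h_mem : X * descentPoly crownLabel (linearExtensions (crownRel (n := n)) univ) ∈
      gammaCone (2 * n) := by
    simpa using isTwoLevel_crownRel.descentPoly_linearExtensions_univ_mem_gammaCone
      crownLabel_injective fun _ _ ↦ crownLabel_lt_of_crownRel
  have h_coeff (j : ℕ) : {σ : Equiv.Perm (Fin (2 * n)) | IsCAP σ ∧ cswap σ = j}.ncard =
      (X * descentPoly crownLabel (linearExtensions (crownRel (n := n)) univ)).coeff (j + 1) := by
    rw [coeff_X_mul, coeff_descentPoly_crownLabel]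
  simp only [h_coeff]
  exact ⟨fun j hj ↦ coeff_eq_coeff_of_mem_gammaCone h_mem (by omega),
    fun j hj ↦ coeff_le_coeff_succ_of_mem_gammaCone h_mem (by omega)⟩
end

section
/- Let n ≥ 1. There exist nonnegative integers γ_0, γ_1, …, γ_{n−1} such that Σ_{σ ∈ CA_{2n}} t^{cswap(σ)} = Σ_{j=0}^{n−1} γ_j · t^j · (1+t)^{2n−2−2j} as an identity of polynomials in ℤ[t]. (The left-hand side is the h*-polynomial of the order polytope of the crown poset C_{2n}, so this expresses its γ-nonnegativity.) -/
/-!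
The descent enumerator of the linear extensions of a finite poset does not depend on the natural
labelling chosen. For a suitable labelling `cswap` is the number of descents of the corresponding
linear extension of the crown; by label independence we may pass to a labelling in which every
minimal element of the crown has a smaller label than every maximal one. Cut a linear extension into
its maximal blocks of minimal and of maximal elements. The blocks are antichains, so their letters
can be rearranged freely and each block of size `a` contributes an Eulerian polynomial, which is
γ-nonnegative of degree `a - 1`. Between blocks there is a descent exactly when a block of maximal
elements is followed by one of minimal elements. As every linear extension starts with a minimal
and ends with a maximal element, all the resulting products have the same centre of symmetry.
-/

namespace CrownPoset

open Polynomial Finset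
open scoped Classical

/-- The cone of γ-nonnegative polynomials with centre of symmetry `d / 2`: the nonnegative integer
combinations of the `X ^ j * (1 + X) ^ e` with `2 * j + e = d`. -/
noncomputable def gammaCone (d : ℕ) : AddSubmonoid ℤ[X] :=
  AddSubmonoid.closure {p | ∃ j e, 2 * j + e = d ∧ p = X ^ j * (1 + X) ^ e}

lemma X_pow_mul_one_add_X_pow_mem_gammaCone (j e : ℕ) :
    (X ^ j * (1 + X) ^ e : ℤ[X]) ∈ gammaCone (2 * j + e) :=
  AddSubmonoid.subset_closure ⟨j, e, rfl, rfl⟩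

lemma one_mem_gammaCone : (1 : ℤ[X]) ∈ gammaCone 0 := by
  simpa using X_pow_mul_one_add_X_pow_mem_gammaCone 0 0

lemma X_mem_gammaCone : (X : ℤ[X]) ∈ gammaCone 2 := by
  simpa using X_pow_mul_one_add_X_pow_mem_gammaCone 1 0

lemma one_add_X_mem_gammaCone : (1 + X : ℤ[X]) ∈ gammaCone 1 := by
  simpa using X_pow_mul_one_add_X_pow_mem_gammaCone 0 1

lemma mul_mem_gammaCone {d e f : ℕ} {p q : ℤ[X]} (hp : p ∈ gammaCone d) (hq : q ∈ gammaCone e)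
    (h : d + e = f) : p * q ∈ gammaCone f := by
  have hpq := AddSubmonoid.mul_mem_mul hp hq
  rw [gammaCone, gammaCone, AddSubmonoid.closure_mul_closure] at hpq
  refine AddSubmonoid.closure_mono ?_ hpq
  rintro _ ⟨_, ⟨j, a, rfl, rfl⟩, _, ⟨k, b, rfl, rfl⟩, rfl⟩
  exact ⟨j + k, a + b, by omega, by ring⟩

lemma mul_X_mul_mem_gammaCone {a b : ℕ} {p q : ℤ[X]} (ha : 0 < a) (hb : 0 < b)
    (hp : p ∈ gammaCone (a - 1)) (hq : q ∈ gammaCone (b - 1)) : p * (X * q) ∈ gammaCone (a + b) :=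
  mul_mem_gammaCone hp (mul_mem_gammaCone X_mem_gammaCone hq rfl) (by omega)

lemma exists_gamma_of_mem_gammaCone {d : ℕ} {p : ℤ[X]} (hp : p ∈ gammaCone d) :
    ∃ γ : ℕ → ℕ, p = ∑ j ∈ range (d / 2 + 1), (γ j : ℤ[X]) * X ^ j * (1 + X) ^ (d - 2 * j) := by
  induction hp using AddSubmonoid.closure_induction with
  | zero => exact ⟨0, by simp⟩
  | add p q _ _ hp hq =>
    obtain ⟨f, rfl⟩ := hp
    obtain ⟨g, rfl⟩ := hq
    exact ⟨f + g, by simp [add_mul, sum_add_distrib]⟩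
  | mem p hp =>
    obtain ⟨j, e, rfl, rfl⟩ := hp
    refine ⟨Pi.single j 1, ?_⟩
    rw [sum_eq_single_of_mem j (by simp; omega) fun i _ hij => by simp [Pi.single_eq_of_ne hij]]
    simp

section Descents

variable {ι β : Type*} [LinearOrder β]

/-- The number of descents of a word whose letters are compared through the labelling `ℓ`. -/
def des (ℓ : ι → β) : List ι → ℕ
  | [] => 0
  | x :: w => (if ∃ y ∈ w.head?, ℓ y < ℓ x then 1 else 0) + des ℓ w

lemma des_cons_cons (ℓ : ι → β) (x y : ι) (w : List ι) :
    des ℓ (x :: y :: w) = (if ℓ y < ℓ x then 1 else 0) + des ℓ (y :: w) := by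
  simp [des]

lemma des_append (ℓ : ι → β) (u v : List ι) :
    des ℓ (u ++ v) =
      des ℓ u + des ℓ v + if ∃ x ∈ u.getLast?, ∃ y ∈ v.head?, ℓ y < ℓ x then 1 else 0 := by
  induction u with
  | nil => simp [des]
  | cons a u ih =>
    rcases u with _ | ⟨b, u⟩
    · simp [des, add_comm]
    · simp only [List.cons_append, des_cons_cons, List.getLast?_cons_cons] at ih ⊢
      omega

lemma des_ofFn (ℓ : ι → β) {N : ℕ} (f : Fin N → ι) :
    des ℓ (List.ofFn f) = #{k : Fin N | ∃ j : Fin N, (j : ℕ) = k + 1 ∧ ℓ (f j) < ℓ (f k)} := by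
  induction N with
  | zero => simp [des]
  | succ N ih =>
    rw [List.ofFn_succ, des, ih, Fin.card_filter_univ_succ]
    have hhead : (∃ y ∈ (List.ofFn fun i : Fin N => f i.succ).head?, ℓ y < ℓ (f 0)) ↔
        ∃ j : Fin (N + 1), (j : ℕ) = (0 : Fin (N + 1)) + 1 ∧ ℓ (f j) < ℓ (f 0) := by
      rcases N with _ | N <;> simp [Fin.exists_fin_succ]
    have hsucc (k : Fin N) :
        (∃ j : Fin (N + 1), (j : ℕ) = k.succ + 1 ∧ ℓ (f j) < ℓ (f k.succ)) ↔
          ∃ j : Fin N, (j : ℕ) = k + 1 ∧ ℓ (f j.succ) < ℓ (f k.succ) := by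
      simp [Fin.exists_fin_succ]
    simp only [hhead, hsucc]
    split_ifs <;> omega

end Descents

section LinearExtensions

variable {ι : Type*} (r : ι → ι → Prop)

/-- The linear extensions of the relation `r` restricted to `S`, written as words. -/
noncomputable def linExt (S : Finset ι) : Finset (List ι) :=
  {w ∈ S.toList.permutations.toFinset | w.Pairwise fun x y => ¬ r y x}

/-- The order ideals of the relation `r` restricted to `S`. -/
noncomputable def ideals (S : Finset ι) : Finset (Finset ι) :=
  {A ∈ S.powerset | ∀ x ∈ A, ∀ y ∈ S \ A, ¬ r y x}

variable {r} {S A : Finset ι} {u v w : List ι}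

lemma mem_linExt :
    w ∈ linExt r S ↔ w.Nodup ∧ w.toFinset = S ∧ w.Pairwise fun x y => ¬ r y x := by
  simp only [linExt, mem_filter, List.mem_toFinset, List.mem_permutations, ← and_assoc]
  refine and_congr_left fun _ => ⟨fun h => ?_, fun ⟨hnd, hS⟩ => ?_⟩
  · exact ⟨h.nodup_iff.2 S.nodup_toList, by rw [List.toFinset_eq_of_perm _ _ h, toList_toFinset]⟩
  · exact List.perm_of_nodup_nodup_toFinset_eq hnd S.nodup_toList (by rw [hS, toList_toFinset])

lemma linExt_empty : linExt r ∅ = {[]} := by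
  ext w
  simp +contextual [mem_linExt, iff_def]

lemma ne_nil_of_mem_linExt (hS : S.Nonempty) (hw : w ∈ linExt r S) : w ≠ [] := by
  rintro rfl
  exact hS.ne_empty (by simpa using (mem_linExt.1 hw).2.1.symm)

lemma exists_mem_head?_of_mem_linExt (hS : S.Nonempty) (hw : w ∈ linExt r S) :
    ∃ x ∈ w.head?, x ∈ S := by
  rcases w with _ | ⟨x, w⟩
  · exact absurd rfl (ne_nil_of_mem_linExt hS hw)
  · exact ⟨x, by simp, by simp [← (mem_linExt.1 hw).2.1]⟩

lemma mem_ideals : A ∈ ideals r S ↔ A ⊆ S ∧ ∀ x ∈ A, ∀ y ∈ S \ A, ¬ r y x := by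
  simp [ideals]

lemma append_mem_linExt_iff :
    u ++ v ∈ linExt r S ↔
      u.toFinset ∈ ideals r S ∧ u ∈ linExt r u.toFinset ∧ v ∈ linExt r (S \ u.toFinset) := by
  simp only [mem_linExt, mem_ideals, List.nodup_append', List.pairwise_append,
    List.toFinset_append, ← List.disjoint_toFinset_iff_disjoint, true_and]
  constructor
  · rintro ⟨⟨hu, hv, huv⟩, rfl, hru, hrv, hr⟩
    have hsdiff : (u.toFinset ∪ v.toFinset) \ u.toFinset = v.toFinset :=
      union_sdiff_cancel_left huv
    rw [hsdiff]
    exact ⟨⟨subset_union_left, by simpa using hr⟩, ⟨hu, hru⟩, hv, rfl, hrv⟩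
  · rintro ⟨⟨hus, hr⟩, ⟨hu, hru⟩, hv, hvs, hrv⟩
    refine ⟨⟨hu, hv, hvs ▸ disjoint_sdiff⟩, by rw [hvs, union_sdiff_of_subset hus], hru, hrv, ?_⟩
    simpa [← hvs] using hr

/-- The sum of `F u v` over all factorizations `w = u ++ v`. -/
def splitSum {M : Type*} [AddCommMonoid M] (F : List ι → List ι → M) (w : List ι) : M :=
  ∑ k ∈ range (w.length + 1), F (w.take k) (w.drop k)

section SplitSum

variable {M : Type*} [AddCommMonoid M] (F : List ι → List ι → M)

lemma splitSum_nil : splitSum F [] = F [] [] := by simp [splitSum]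

lemma splitSum_cons (x : ι) (w : List ι) :
    splitSum F (x :: w) = splitSum (fun u v => F (x :: u) v) w + F [] (x :: w) := by
  simp [splitSum, sum_range_succ']

lemma sum_linExt_splitSum (S : Finset ι) :
    ∑ w ∈ linExt r S, splitSum F w =
      ∑ A ∈ ideals r S, ∑ u ∈ linExt r A, ∑ v ∈ linExt r (S \ A), F u v := by
  simp only [splitSum, ← sum_product']
  rw [sum_sigma', sum_sigma']
  refine sum_nbij' (fun p => ⟨(p.1.take p.2).toFinset, p.1.take p.2, p.1.drop p.2⟩)
    (fun p => ⟨p.2.1 ++ p.2.2, p.2.1.length⟩) ?_ ?_ ?_ ?_ fun _ _ => rfl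
  · rintro ⟨w, k⟩ h
    have hw : w.take k ++ w.drop k ∈ linExt r S := by simpa using (mem_sigma.1 h).1
    simpa using append_mem_linExt_iff.1 hw
  · rintro ⟨A, u, v⟩ h
    simp only [mem_sigma, mem_product] at h
    obtain rfl : u.toFinset = A := (mem_linExt.1 h.2.1).2.1
    simpa using append_mem_linExt_iff.2 h
  · rintro ⟨w, k⟩ h
    have hk : k ≤ w.length := by simpa [Nat.lt_succ_iff] using (mem_sigma.1 h).2
    simp [hk]
  · rintro ⟨A, u, v⟩ h
    simp only [mem_sigma, mem_product] at h
    obtain rfl : u.toFinset = A := (mem_linExt.1 h.2.1).2.1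
    simp

end SplitSum

end LinearExtensions

section LabelIndependence

variable {ι β : Type*} [LinearOrder β] {r : ι → ι → Prop} {ℓ : ι → β} {S : Finset ι}

variable (r ℓ S) in
/-- The descent enumerator of the linear extensions of `r` on `S`; if `r` is a partial order and
`ℓ` a natural labelling, this is the `h*`-polynomial of the order polytope. -/
noncomputable def descentPoly : ℤ[X] := ∑ w ∈ linExt r S, X ^ des ℓ w

lemma descentPoly_empty : descentPoly r ℓ ∅ = 1 := by
  simp [descentPoly, linExt_empty, des]

variable (ℓ) in
/-- The weight in `X ^ des w = ∑ descentWeight u * X ^ des v`, over all `w = u ++ v`: writing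
`X = 1 + (X - 1)` marks some of the descents, and `u` is the maximal initial run of marked ones. -/
noncomputable def descentWeight (u : List ι) : ℤ[X] :=
  if u ≠ [] ∧ u.IsChain (fun x y => ℓ y < ℓ x) then (X - 1) ^ (u.length - 1) else 0

lemma descentWeight_cons_cons (x y : ι) (u : List ι) :
    descentWeight ℓ (x :: y :: u) =
      (if ℓ y < ℓ x then X - 1 else 0) * descentWeight ℓ (y :: u) := by
  by_cases hyx : ℓ y < ℓ x <;> simp [descentWeight, hyx, pow_succ']

lemma splitSum_descentWeight {w : List ι} (hw : w ≠ []) :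
    splitSum (fun u v => descentWeight ℓ u * X ^ des ℓ v) w = X ^ des ℓ w := by
  have hnil : descentWeight ℓ [] = 0 := by simp [descentWeight]
  have hsingle (x : ι) : descentWeight ℓ [x] = 1 := by simp [descentWeight]
  induction w with
  | nil => exact absurd rfl hw
  | cons x w ih =>
    rcases w with _ | ⟨y, w⟩
    · simp [splitSum_cons, splitSum_nil, hnil, hsingle, des]
    · have hfactor : splitSum (fun u v => descentWeight ℓ (x :: y :: u) * X ^ des ℓ v) w =
          (if ℓ y < ℓ x then X - 1 else 0) * X ^ des ℓ (y :: w) := by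
        rw [← ih (by simp), splitSum_cons]
        simp only [splitSum, descentWeight_cons_cons, hnil, mul_sum, mul_assoc, zero_mul, add_zero]
      rw [splitSum_cons, splitSum_cons, hfactor, des_cons_cons, hnil, hsingle]
      split_ifs <;> ring

lemma card_filter_linExt_isChain (hℓ : ℓ.Injective) (hr : ∀ x y, r x y → ℓ x < ℓ y)
    (A : Finset ι) :
    #{u ∈ linExt r A | u.IsChain fun x y => ℓ y < ℓ x} =
      if IsAntichain r (A : Set ι) then 1 else 0 := by
  let _ := LinearOrder.lift' ℓ hℓ
  change #{u ∈ linExt r A | u.IsChain (· > ·)} = _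
  simp only [← List.sortedGT_iff_isChain]
  split_ifs with hA
  · refine card_eq_one.2 ⟨A.sort (· ≥ ·), ?_⟩
    ext u
    simp only [mem_filter, mem_linExt, mem_singleton]
    constructor
    · rintro ⟨⟨-, rfl, -⟩, hu⟩
      exact hu.eq_of_mem_iff (sortedGT_sort _) (by simp)
    · rintro rfl
      refine ⟨⟨sort_nodup _ _, by ext; simp, ?_⟩, sortedGT_sort A⟩
      refine (sort_nodup A (· ≥ ·)).imp_of_mem fun {x y} hx hy hxy => ?_
      exact hA ((mem_sort _).1 hy) ((mem_sort _).1 hx) hxy.symm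
  · simp only [card_eq_zero, filter_eq_empty_iff, mem_linExt]
    rintro u ⟨-, rfl, hu⟩ hdec
    refine hA fun x hx y hy hne => ?_
    have hsymm : Std.Symm fun x y => ¬ r x y ∧ ¬ r y x := ⟨fun _ _ => And.symm⟩
    have hincomp : u.Pairwise fun x y => ¬ r x y ∧ ¬ r y x :=
      hdec.pairwise.imp₂ (fun x y hyx hxy => ⟨fun h => (hr x y h).not_gt hyx, hxy⟩) hu
    exact (hincomp.forall (by simpa using hx) (by simpa using hy) hne).1

lemma sum_linExt_descentWeight (hℓ : ℓ.Injective) (hr : ∀ x y, r x y → ℓ x < ℓ y)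
    (A : Finset ι) :
    ∑ u ∈ linExt r A, descentWeight ℓ u =
      if A.Nonempty ∧ IsAntichain r (A : Set ι) then (X - 1) ^ (#A - 1) else 0 := by
  have hweight : ∀ u ∈ linExt r A, descentWeight ℓ u =
      if u.IsChain fun x y => ℓ y < ℓ x then if A.Nonempty then (X - 1) ^ (#A - 1) else 0
      else 0 := by
    intro u hu
    obtain ⟨hnd, rfl, -⟩ := mem_linExt.1 hu
    simp only [descentWeight, List.toFinset_card_of_nodup hnd, List.toFinset_nonempty_iff,
      ← ite_and, and_comm]
  rw [sum_congr rfl hweight, ← sum_filter, sum_const, card_filter_linExt_isChain hℓ hr A]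
  split_ifs <;> simp_all

lemma descentPoly_eq_sum_ideals (hℓ : ℓ.Injective) (hr : ∀ x y, r x y → ℓ x < ℓ y)
    (hS : S.Nonempty) :
    descentPoly r ℓ S = ∑ A ∈ ideals r S,
      (if A.Nonempty ∧ IsAntichain r (A : Set ι) then (X - 1) ^ (#A - 1) else 0) *
        descentPoly r ℓ (S \ A) := by
  calc descentPoly r ℓ S
      = ∑ w ∈ linExt r S, splitSum (fun u v => descentWeight ℓ u * X ^ des ℓ v) w :=
        sum_congr rfl fun w hw => (splitSum_descentWeight (ne_nil_of_mem_linExt hS hw)).symm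
    _ = _ := by
        rw [sum_linExt_splitSum]
        simp only [← sum_mul_sum, sum_linExt_descentWeight hℓ hr, descentPoly]

theorem descentPoly_eq_of_natural {β' : Type*} [LinearOrder β'] {ℓ' : ι → β'}
    (hℓ : ℓ.Injective) (hr : ∀ x y, r x y → ℓ x < ℓ y)
    (hℓ' : ℓ'.Injective) (hr' : ∀ x y, r x y → ℓ' x < ℓ' y) (S : Finset ι) :
    descentPoly r ℓ S = descentPoly r ℓ' S := by
  induction S using Finset.strongInduction with
  | H S ih =>
    rcases S.eq_empty_or_nonempty with rfl | hS
    · rw [descentPoly_empty, descentPoly_empty]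
    · rw [descentPoly_eq_sum_ideals hℓ hr hS, descentPoly_eq_sum_ideals hℓ' hr' hS]
      refine sum_congr rfl fun A hA => ?_
      split_ifs with hA'
      · rw [ih _ (sdiff_ssubset (mem_ideals.1 hA).1 hA'.1)]
      · simp only [zero_mul]

end LabelIndependence

section Peeling

variable {ι β : Type*} [LinearOrder β] {r : ι → ι → Prop} {ℓ : ι → β} {q : ι → Prop}
  {S A : Finset ι}

lemma splitSum_maximal_prefix {M : Type*} [AddCommMonoid M] (q : ι → Prop) (f : List ι → M)
    (w : List ι) :
    splitSum (fun u v => if (∀ x ∈ u, q x) ∧ ∀ x ∈ v.head?, ¬ q x then f (u ++ v) else 0) w =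
      f w := by
  induction w generalizing f with
  | nil => simp [splitSum_nil]
  | cons x w ih =>
    rw [splitSum_cons]
    by_cases hx : q x
    · simpa [hx] using ih fun w => f (x :: w)
    · simp [hx, splitSum]

lemma splitSum_maximal_prefix_ne_nil {M : Type*} [AddCommMonoid M] (q : ι → Prop)
    (f : List ι → M) (w : List ι) :
    splitSum (fun u v => if u ≠ [] ∧ (∀ x ∈ u, q x) ∧ ∀ x ∈ v.head?, ¬ q x
      then f (u ++ v) else 0) w = if ∃ x ∈ w.head?, q x then f w else 0 := by
  rcases w with _ | ⟨x, w⟩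
  · simp [splitSum_nil]
  · rw [splitSum_cons]
    by_cases hx : q x
    · simpa [hx] using splitSum_maximal_prefix q (fun w => f (x :: w)) w
    · simp [hx, splitSum]

variable (r ℓ q S) in
/-- The part of `descentPoly r ℓ S` coming from the words whose first letter satisfies `q`. -/
noncomputable def headPoly : ℤ[X] :=
  ∑ w ∈ linExt r S with ∃ x ∈ w.head?, q x, X ^ des ℓ w

variable (r q S) in
/-- The possible supports of the maximal initial block of letters satisfying `q`, over all linear
extensions of `r` on `S` starting with such a letter. -/
noncomputable def initialBlocks : Finset (Finset ι) :=
  {A ∈ ideals r S | A.Nonempty ∧ ∀ x ∈ A, q x}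

lemma mem_initialBlocks :
    A ∈ initialBlocks r q S ↔ A ∈ ideals r S ∧ A.Nonempty ∧ ∀ x ∈ A, q x := by
  simp [initialBlocks]

lemma headPoly_add_headPoly_not (q : ι → Prop) (hS : S.Nonempty) :
    headPoly r ℓ q S + headPoly r ℓ (fun x => ¬ q x) S = descentPoly r ℓ S := by
  simp only [headPoly, descentPoly, sum_filter, ← sum_add_distrib]
  refine sum_congr rfl fun w hw => ?_
  obtain ⟨x, hx, -⟩ := exists_mem_head?_of_mem_linExt hS hw
  by_cases hqx : q x <;> simp [Option.mem_def.1 hx, hqx]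

lemma headPoly_eq_descentPoly (hS : S.Nonempty)
    (hq : ∀ x ∈ S, (∀ y ∈ S, y ≠ x → ¬ r y x) → q x) :
    headPoly r ℓ q S = descentPoly r ℓ S := by
  rw [headPoly, filter_true_of_mem, descentPoly]
  rintro (_ | ⟨x, w⟩) hw
  · exact absurd rfl (ne_nil_of_mem_linExt hS hw)
  · obtain ⟨-, rfl, hrw⟩ := mem_linExt.1 hw
    refine ⟨x, by simp, hq x (by simp) fun y hy hyx => (List.pairwise_cons.1 hrw).1 y ?_⟩
    simpa [hyx] using hy

lemma sum_X_pow_des_append {c : ℤ[X]} {T : Finset ι} (hA : A.Nonempty)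
    (hc : ∀ x ∈ A, ∀ y ∈ T, q y → (if ℓ y < ℓ x then X else 1) = c) :
    (∑ u ∈ linExt r A, ∑ v ∈ linExt r T,
      if ∀ x ∈ v.head?, q x then (X ^ des ℓ (u ++ v) : ℤ[X]) else 0) =
      descentPoly r ℓ A * if T = ∅ then 1 else c * headPoly r ℓ q T := by
  rcases T.eq_empty_or_nonempty with rfl | hT
  · simp [linExt_empty, descentPoly]
  · have hterm : ∀ u ∈ linExt r A, ∀ v ∈ linExt r T,
        (if ∀ x ∈ v.head?, q x then (X ^ des ℓ (u ++ v) : ℤ[X]) else 0) =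
          X ^ des ℓ u * (c * if ∃ x ∈ v.head?, q x then X ^ des ℓ v else 0) := by
      intro u hu v hv
      obtain ⟨y, hy, hyT⟩ := exists_mem_head?_of_mem_linExt hT hv
      obtain ⟨x, hx⟩ := Option.ne_none_iff_exists'.1
        (mt List.getLast?_eq_none_iff.1 (ne_nil_of_mem_linExt hA hu))
      have hxA : x ∈ A := by
        rw [← (mem_linExt.1 hu).2.1]
        exact List.mem_toFinset.2 (List.mem_of_getLast? hx)
      by_cases hqy : q y
      · simp only [Option.mem_def.1 hy, des_append, hx, ← hc x hxA y hyT hqy, Option.mem_some_iff,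
          forall_eq', exists_eq_left', hqy, if_true]
        split_ifs <;> ring
      · simp [Option.mem_def.1 hy, hqy]
    rw [sum_congr rfl fun u hu => sum_congr rfl (hterm u hu), if_neg hT.ne_empty, headPoly,
      sum_filter, descentPoly, mul_sum, sum_mul_sum]

theorem headPoly_eq_sum_initialBlocks {c : ℤ[X]}
    (hc : ∀ x ∈ S, ∀ y ∈ S, q x → ¬ q y → (if ℓ y < ℓ x then X else 1) = c) :
    headPoly r ℓ q S = ∑ A ∈ initialBlocks r q S, descentPoly r ℓ A *
      if S \ A = ∅ then 1 else c * headPoly r ℓ (fun x => ¬ q x) (S \ A) := by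
  rw [headPoly, sum_filter]
  simp only [← splitSum_maximal_prefix_ne_nil q fun w => (X ^ des ℓ w : ℤ[X])]
  rw [sum_linExt_splitSum, initialBlocks, sum_filter]
  refine sum_congr rfl fun A hA => ?_
  have hblock : ∀ u ∈ linExt r A, (u ≠ [] ∧ ∀ x ∈ u, q x) ↔ A.Nonempty ∧ ∀ x ∈ A, q x := by
    intro u hu
    simp [← (mem_linExt.1 hu).2.1]
  by_cases hAq : A.Nonempty ∧ ∀ x ∈ A, q x
  · have hcA : ∀ x ∈ A, ∀ y ∈ S \ A, ¬ q y → (if ℓ y < ℓ x then X else 1) = c := fun x hx y hy =>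
      hc x ((mem_ideals.1 hA).1 hx) y (mem_sdiff.1 hy).1 (hAq.2 x hx)
    rw [if_pos hAq, ← sum_X_pow_des_append hAq.1 hcA]
    refine sum_congr rfl fun u hu => sum_congr rfl fun v _ => ?_
    by_cases hv : ∀ x ∈ v.head?, ¬ q x
    · rw [if_pos ⟨((hblock u hu).2 hAq).1, ((hblock u hu).2 hAq).2, hv⟩, if_pos hv]
    · rw [if_neg fun h => hv h.2.2, if_neg hv]
  · rw [if_neg hAq]
    refine sum_eq_zero fun u hu => sum_eq_zero fun v _ => if_neg fun h => hAq ?_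
    exact (hblock u hu).1 ⟨h.1, h.2.1⟩

end Peeling

section Antichains

variable {ι β : Type*} [LinearOrder β] {r : ι → ι → Prop} {ℓ : ι → β} {S T A : Finset ι} {M : ι}

lemma descentPoly_singleton (x : ι) : descentPoly r ℓ {x} = 1 := by
  have hlin : linExt r {x} = {[x]} := by
    ext w
    rw [mem_linExt, mem_singleton]
    constructor
    · rintro ⟨hnd, hw, -⟩
      exact List.perm_singleton.1 <|
        List.perm_of_nodup_nodup_toFinset_eq hnd (List.nodup_singleton x) (by simpa using hw)
    · rintro rfl
      simp
  simp [descentPoly, hlin, des]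

lemma mem_ideals_of_isAntichain (hr : IsAntichain r (S : Set ι)) (hA : A ⊆ S) :
    A ∈ ideals r S := by
  refine mem_ideals.2 ⟨hA, fun x hx y hy => hr (mem_sdiff.1 hy).1 (hA hx) ?_⟩
  rintro rfl
  exact (mem_sdiff.1 hy).2 hx

lemma headPoly_max_insert (hr : IsAntichain r (insert M T : Finset ι)) (hMT : M ∉ T)
    (hmax : ∀ x ∈ T, ℓ x < ℓ M) :
    headPoly r ℓ (· = M) (insert M T) = if T = ∅ then 1 else X * descentPoly r ℓ T := by
  have hblocks : initialBlocks r (· = M) (insert M T) = {{M}} := by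
    ext A
    rw [mem_initialBlocks, ← eq_singleton_iff_nonempty_unique_mem, mem_singleton,
      and_iff_right_iff_imp]
    rintro rfl
    exact mem_ideals_of_isAntichain hr (by simp)
  rw [headPoly_eq_sum_initialBlocks (c := X), hblocks, sum_singleton, descentPoly_singleton,
    one_mul, insert_sdiff_of_mem _ (mem_singleton_self M), sdiff_singleton_eq_erase,
    erase_eq_of_notMem hMT]
  · split_ifs with hT
    · rfl
    · rw [headPoly_eq_descentPoly (nonempty_iff_ne_empty.2 hT)]
      rintro x hx - rfl
      exact hMT hx
  · rintro _ _ y hy rfl hyM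
    exact if_pos (hmax y (mem_of_mem_insert_of_ne hy hyM))

lemma headPoly_ne_max_insert (hr : IsAntichain r (insert M T : Finset ι)) (hMT : M ∉ T)
    (hmax : ∀ x ∈ T, ℓ x < ℓ M) :
    headPoly r ℓ (fun x => ¬ x = M) (insert M T) = ∑ A ∈ T.powerset with A.Nonempty,
      descentPoly r ℓ A * if T \ A = ∅ then 1 else X * descentPoly r ℓ (T \ A) := by
  have hblocks : initialBlocks r (fun x => ¬ x = M) (insert M T) =
      {A ∈ T.powerset | A.Nonempty} := by
    ext A
    rw [mem_initialBlocks, mem_filter, mem_powerset, and_left_comm, and_comm]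
    refine and_congr_left fun _ => ⟨fun ⟨hA, hAM⟩ x hx => ?_, fun hA => ⟨?_, ?_⟩⟩
    · exact mem_of_mem_insert_of_ne ((mem_ideals.1 hA).1 hx) (hAM x hx)
    · exact mem_ideals_of_isAntichain hr (hA.trans (subset_insert M T))
    · rintro x hx rfl
      exact hMT (hA hx)
  rw [headPoly_eq_sum_initialBlocks (c := 1), hblocks]
  · refine sum_congr rfl fun A hA => ?_
    simp only [mem_filter, mem_powerset] at hA
    have hMA : M ∉ A := fun h => hMT (hA.1 h)
    rw [insert_sdiff_of_notMem _ hMA, if_neg (insert_ne_empty _ _), one_mul]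
    simp only [not_not]
    rw [headPoly_max_insert]
    · exact hr.subset (coe_subset.2 (insert_subset_insert M sdiff_subset))
    · simp [hMT]
    · simp +contextual [hmax]
  · intro x hx y _ hxM hyM
    rw [not_not.1 hyM, if_neg (hmax x (mem_of_mem_insert_of_ne hx hxM)).not_gt]

theorem descentPoly_mem_gammaCone_of_antichain (hℓ : ℓ.Injective) (hS : S.Nonempty)
    (hr : IsAntichain r (S : Set ι)) : descentPoly r ℓ S ∈ gammaCone (#S - 1) := by
  induction S using Finset.strongInduction with
  | H S ih =>
    obtain ⟨M, hMS, hle⟩ := S.exists_max_image ℓ hS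
    obtain ⟨T, hMT, rfl⟩ : ∃ T, M ∉ T ∧ insert M T = S :=
      ⟨S.erase M, notMem_erase M S, insert_erase hMS⟩
    have hmax : ∀ x ∈ T, ℓ x < ℓ M := fun x hx => (hle x (mem_insert_of_mem hx)).lt_of_ne <|
      hℓ.ne <| ne_of_mem_of_not_mem hx hMT
    have ih' : ∀ A ⊆ T, A.Nonempty → descentPoly r ℓ A ∈ gammaCone (#A - 1) := fun A hA hne =>
      ih A (hA.trans_ssubset (ssubset_insert hMT)) hne
        (hr.subset (coe_subset.2 (hA.trans (subset_insert M T))))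
    rw [← headPoly_add_headPoly_not (· = M) hS, headPoly_max_insert hr hMT hmax,
      headPoly_ne_max_insert hr hMT hmax, card_insert_of_notMem hMT, add_tsub_cancel_right]
    rcases T.eq_empty_or_nonempty with rfl | hT
    · simpa [sum_filter] using one_mem_gammaCone
    · have hTmem : T ∈ T.powerset.filter Finset.Nonempty := by simp [hT]
      rw [if_neg hT.ne_empty, ← add_sum_erase _ _ hTmem, if_pos (Finset.sdiff_self T),
        ← add_assoc]
      refine add_mem ?_ (sum_mem fun A hA => ?_)
      · have hfactor : X * descentPoly r ℓ T + descentPoly r ℓ T * 1 =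
            (1 + X) * descentPoly r ℓ T := by ring
        rw [hfactor]
        exact mul_mem_gammaCone one_add_X_mem_gammaCone (ih' T subset_rfl hT)
          (Nat.add_sub_cancel' hT.card_pos)
      · simp only [mem_erase, mem_filter, mem_powerset] at hA
        obtain ⟨hAT, hA, hne⟩ := hA
        have hTA : (T \ A).Nonempty := sdiff_nonempty.2 fun h => hAT (hA.antisymm h)
        rw [if_neg hTA.ne_empty, ← card_sdiff_add_card_eq_card hA, add_comm]
        exact mul_X_mul_mem_gammaCone hne.card_pos hTA.card_pos (ih' A hA hne)
          (ih' (T \ A) sdiff_subset hTA)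

end Antichains

section TwoLevels

variable {ι β : Type*} [LinearOrder β] {r : ι → ι → Prop} {ℓ : ι → β} {S A : Finset ι}
  {high : ι → Prop}

lemma isAntichain_of_forall_high (hrel : ∀ x y, r x y → ¬ high x ∧ high y)
    (hA : ∀ x ∈ A, high x) : IsAntichain r (A : Set ι) :=
  fun x hx _ _ _ hxy => (hrel x _ hxy).1 (hA x hx)

lemma isAntichain_of_forall_low (hrel : ∀ x y, r x y → ¬ high x ∧ high y)
    (hA : ∀ x ∈ A, ¬ high x) : IsAntichain r (A : Set ι) :=
  fun _ _ y hy _ hxy => hA y hy (hrel _ y hxy).2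

lemma exists_above_sdiff (hup : ∀ x ∈ S, ¬ high x → ∃ y ∈ S, r x y) (hA : A ∈ ideals r S) :
    ∀ x ∈ S \ A, ¬ high x → ∃ y ∈ S \ A, r x y := by
  intro x hx hlow
  obtain ⟨y, hy, hxy⟩ := hup x (mem_sdiff.1 hx).1 hlow
  exact ⟨y, mem_sdiff.2 ⟨hy, fun hyA => (mem_ideals.1 hA).2 y hyA x hx hxy⟩, hxy⟩

lemma sdiff_nonempty_of_low_block (hrel : ∀ x y, r x y → ¬ high x ∧ high y)
    (hup : ∀ x ∈ S, ¬ high x → ∃ y ∈ S, r x y)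
    (hA : A ∈ initialBlocks r (fun x => ¬ high x) S) : (S \ A).Nonempty := by
  obtain ⟨hideal, ⟨x, hx⟩, hlow⟩ := mem_initialBlocks.1 hA
  obtain ⟨y, hy, hxy⟩ := hup x ((mem_ideals.1 hideal).1 hx) (hlow x hx)
  exact ⟨y, mem_sdiff.2 ⟨hy, fun hyA => hlow y hyA (hrel x y hxy).2⟩⟩

lemma headPoly_low_eq_sum (hrel : ∀ x y, r x y → ¬ high x ∧ high y)
    (hlt : ∀ x y, ¬ high x → high y → ℓ x < ℓ y)
    (hup : ∀ x ∈ S, ¬ high x → ∃ y ∈ S, r x y) :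
    headPoly r ℓ (fun x => ¬ high x) S = ∑ A ∈ initialBlocks r (fun x => ¬ high x) S,
      descentPoly r ℓ A * headPoly r ℓ high (S \ A) := by
  rw [headPoly_eq_sum_initialBlocks (c := 1) fun x _ y _ hx hy =>
    if_neg (hlt x y hx (not_not.1 hy)).not_gt]
  refine sum_congr rfl fun A hA => ?_
  rw [if_neg (sdiff_nonempty_of_low_block hrel hup hA).ne_empty, one_mul]
  simp only [not_not]

lemma headPoly_high_mem_gammaCone (hℓ : ℓ.Injective) (hrel : ∀ x y, r x y → ¬ high x ∧ high y)
    (hlt : ∀ x y, ¬ high x → high y → ℓ x < ℓ y)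
    (hup : ∀ x ∈ S, ¬ high x → ∃ y ∈ S, r x y) :
    headPoly r ℓ high S ∈ gammaCone (#S - 1) := by
  induction S using Finset.strongInduction with
  | H S ih =>
    rw [headPoly_eq_sum_initialBlocks (c := X) fun x _ y _ hx hy => if_pos (hlt y x hy hx)]
    refine sum_mem fun A hA => ?_
    obtain ⟨hAideal, hAne, hAhigh⟩ := mem_initialBlocks.1 hA
    have hAS := (mem_ideals.1 hAideal).1
    have hEA := descentPoly_mem_gammaCone_of_antichain hℓ hAne
      (isAntichain_of_forall_high hrel hAhigh)
    have hup' := exists_above_sdiff hup hAideal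
    split_ifs with hSA
    · obtain rfl : A = S := hAS.antisymm (sdiff_eq_empty_iff_subset.1 hSA)
      rwa [mul_one]
    · rw [headPoly_low_eq_sum hrel hlt hup', mul_sum, mul_sum]
      refine sum_mem fun B hB => ?_
      have hrest := sdiff_nonempty_of_low_block hrel hup' hB
      obtain ⟨hBideal, hBne, hBlow⟩ := mem_initialBlocks.1 hB
      have hBS := (mem_ideals.1 hBideal).1
      have hEB := descentPoly_mem_gammaCone_of_antichain hℓ hBne
        (isAntichain_of_forall_low hrel hBlow)
      have hH := ih ((S \ A) \ B) (sdiff_subset.trans_ssubset (sdiff_ssubset hAS hAne))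
        (exists_above_sdiff hup' hBideal)
      refine mul_mem_gammaCone hEA (mul_mem_gammaCone X_mem_gammaCone
        (mul_mem_gammaCone hEB hH rfl) rfl) ?_
      have := card_sdiff_add_card_eq_card hAS
      have := card_sdiff_add_card_eq_card hBS
      have := hAne.card_pos
      have := hBne.card_pos
      have := hrest.card_pos
      omega

theorem descentPoly_mem_gammaCone_of_low_lt_high (hℓ : ℓ.Injective)
    (hrel : ∀ x y, r x y → ¬ high x ∧ high y) (hlt : ∀ x y, ¬ high x → high y → ℓ x < ℓ y)
    (hS : S.Nonempty) (hup : ∀ x ∈ S, ¬ high x → ∃ y ∈ S, r x y)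
    (hdown : ∀ y ∈ S, high y → ∃ x ∈ S, r x y) :
    descentPoly r ℓ S ∈ gammaCone (#S - 2) := by
  have hlow : ∀ x ∈ S, (∀ y ∈ S, y ≠ x → ¬ r y x) → ¬ high x := by
    intro y hy hmin hhigh
    obtain ⟨x, hx, hxy⟩ := hdown y hy hhigh
    refine hmin x hx ?_ hxy
    rintro rfl
    exact (hrel x x hxy).1 hhigh
  rw [← headPoly_eq_descentPoly hS hlow, headPoly_low_eq_sum hrel hlt hup]
  refine sum_mem fun A hA => ?_
  have hrest := sdiff_nonempty_of_low_block hrel hup hA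
  obtain ⟨hideal, hne, hAlow⟩ := mem_initialBlocks.1 hA
  refine mul_mem_gammaCone
    (descentPoly_mem_gammaCone_of_antichain hℓ hne (isAntichain_of_forall_low hrel hAlow))
    (headPoly_high_mem_gammaCone hℓ hrel hlt (exists_above_sdiff hup hideal)) ?_
  have := card_sdiff_add_card_eq_card (mem_ideals.1 hideal).1
  have := hne.card_pos
  have := hrest.card_pos
  omega

theorem descentPoly_mem_gammaCone_of_two_levels (hℓ : ℓ.Injective)
    (hr : ∀ x y, r x y → ℓ x < ℓ y) (hrel : ∀ x y, r x y → ¬ high x ∧ high y)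
    (hS : S.Nonempty) (hup : ∀ x ∈ S, ¬ high x → ∃ y ∈ S, r x y)
    (hdown : ∀ y ∈ S, high y → ∃ x ∈ S, r x y) :
    descentPoly r ℓ S ∈ gammaCone (#S - 2) := by
  let ℓ' : ι → Bool ×ₗ β := fun x => toLex (decide (high x), ℓ x)
  have hℓ' : ℓ'.Injective := fun x y hxy => hℓ (Prod.ext_iff.1 (toLex.injective hxy)).2
  have hlt : ∀ x y, ¬ high x → high y → ℓ' x < ℓ' y := fun x y hx hy => by
    simp [ℓ', Prod.Lex.toLex_lt_toLex, hx, hy]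
  have hr' : ∀ x y, r x y → ℓ' x < ℓ' y := fun x y hxy =>
    hlt x y (hrel x y hxy).1 (hrel x y hxy).2
  rw [descentPoly_eq_of_natural hℓ hr hℓ' hr']
  exact descentPoly_mem_gammaCone_of_low_lt_high hℓ' hrel hlt hS hup hdown

end TwoLevels

section PermutationWords

variable {N : ℕ} {r : Fin N → Fin N → Prop}

lemma mem_linExt_univ {w : List (Fin N)} :
    w ∈ linExt r univ ↔ w.Nodup ∧ (∀ i, i ∈ w) ∧ w.Pairwise fun i j => ¬ r j i := by
  simp [mem_linExt, Finset.ext_iff]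

lemma ofFn_inv_mem_linExt_iff (hirr : ∀ i, ¬ r i i) (σ : Equiv.Perm (Fin N)) :
    List.ofFn ⇑σ⁻¹ ∈ linExt r univ ↔ ∀ i j, r i j → σ i < σ j := by
  have hnodup : (List.ofFn ⇑σ⁻¹).Nodup := List.nodup_ofFn.2 σ⁻¹.injective
  have hmem : ∀ i, i ∈ List.ofFn ⇑σ⁻¹ := fun i => (List.mem_ofFn' _ _).2 (σ⁻¹.surjective i)
  rw [mem_linExt_univ, and_iff_right hnodup, and_iff_right hmem, List.pairwise_ofFn]
  constructor
  · intro h i j hij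
    by_contra hle
    rcases (not_lt.1 hle).eq_or_lt with heq | hlt
    · exact hirr j (σ.injective heq ▸ hij)
    · simpa [hij] using h hlt
  · intro h a b hab hr
    simpa [hab.not_gt] using h _ _ hr

lemma exists_ofFn_inv_eq {w : List (Fin N)} (hw : w ∈ linExt r univ) :
    ∃ σ : Equiv.Perm (Fin N), List.ofFn ⇑σ⁻¹ = w := by
  obtain ⟨hnodup, hmem, -⟩ := mem_linExt_univ.1 hw
  let e := hnodup.getEquivOfForallMemList w hmem
  have hlength : N = w.length := by simpa using (Fintype.card_congr e).symm
  refine ⟨((finCongr hlength).trans e)⁻¹, List.ext_getElem (by simpa) fun i _ _ => ?_⟩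
  simp [e]

lemma sum_perm_eq_sum_linExt {M : Type*} [AddCommMonoid M] (hirr : ∀ i, ¬ r i i)
    (f : List (Fin N) → M) :
    ∑ σ : Equiv.Perm (Fin N) with ∀ i j, r i j → σ i < σ j, f (List.ofFn ⇑σ⁻¹) =
      ∑ w ∈ linExt r univ, f w := by
  refine sum_bij (fun σ _ => List.ofFn ⇑σ⁻¹) (fun σ hσ => ?_) (fun σ _ τ _ h => ?_)
    (fun w hw => ?_) fun _ _ => rfl
  · exact (ofFn_inv_mem_linExt_iff hirr σ).2 (mem_filter.1 hσ).2
  · exact inv_injective (DFunLike.coe_injective (List.ofFn_injective h))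
  · obtain ⟨σ, rfl⟩ := exists_ofFn_inv_eq hw
    exact ⟨σ, by simpa using (ofFn_inv_mem_linExt_iff hirr σ).1 hw, rfl⟩

end PermutationWords

section Crown

variable {n : ℕ}

lemma val_cyclicSucc {m : ℕ} (i : Fin m) :
    (cyclicSucc i : ℕ) = if (i : ℕ) + 1 < m then (i : ℕ) + 1 else 0 := by
  split_ifs with h
  · exact Nat.mod_eq_of_lt h
  · exact Nat.mod_eq_zero_of_dvd (by rw [show (i : ℕ) + 1 = m by omega])

lemma odd_cyclicSucc (i : Fin (2 * n)) : Odd (cyclicSucc i : ℕ) ↔ Even (i : ℕ) := by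
  have hval := val_cyclicSucc i
  rw [Nat.odd_iff, Nat.even_iff]
  split_ifs at hval <;> omega

lemma even_cyclicSucc (i : Fin (2 * n)) : Even (cyclicSucc i : ℕ) ↔ Odd (i : ℕ) := by
  rw [← Nat.not_odd_iff_even, odd_cyclicSucc, Nat.not_even_iff_odd]

/-- The relations of the crown poset on the positions `0, …, 2 * n - 1`: each even position lies
below its two cyclic neighbours. -/
def crown (i j : Fin (2 * n)) : Prop :=
  Even (i : ℕ) ∧ (j = cyclicSucc i ∨ i = cyclicSucc j)

lemma not_odd_and_odd_of_crown (i j : Fin (2 * n)) (h : crown i j) :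
    ¬ Odd (i : ℕ) ∧ Odd (j : ℕ) := by
  obtain ⟨hi, rfl | rfl⟩ := h
  · exact ⟨Nat.not_odd_iff_even.2 hi, (odd_cyclicSucc i).2 hi⟩
  · exact ⟨Nat.not_odd_iff_even.2 hi, (even_cyclicSucc j).1 hi⟩

lemma isCAP_iff (σ : Equiv.Perm (Fin (2 * n))) : IsCAP σ ↔ ∀ i j, crown i j → σ i < σ j := by
  constructor
  · intro h i j hij
    obtain ⟨-, hj⟩ := not_odd_and_odd_of_crown i j hij
    obtain ⟨hi, rfl | rfl⟩ := hij
    · exact (h i).1 hi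
    · exact (h j).2 hj
  · intro h i
    refine ⟨fun hi => h _ _ ⟨hi, Or.inl rfl⟩, fun hi => h _ _ ⟨?_, Or.inr rfl⟩⟩
    exact (even_cyclicSucc i).2 hi

/-- A natural labelling `0, 2, 1, 4, 3, …` of the crown for which the swaps of a cyclically
alternating permutation are the descents of its inverse. At position `0` the truncated subtraction
gives the label `0`. -/
def crownLabel (i : Fin (2 * n)) : ℕ := if Even (i : ℕ) then i - 1 else i + 1

lemma crownLabel_injective : (crownLabel : Fin (2 * n) → ℕ).Injective := by
  intro i j h
  simp only [crownLabel, Nat.even_iff] at h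
  split_ifs at h <;> omega

lemma crownLabel_lt_of_crown (i j : Fin (2 * n)) (h : crown i j) :
    crownLabel i < crownLabel j := by
  obtain ⟨hi, hj⟩ := not_odd_and_odd_of_crown i j h
  simp only [crown, Fin.ext_iff, val_cyclicSucc] at h
  simp only [crownLabel, Nat.even_iff, Nat.odd_iff] at *
  split_ifs at * <;> omega

lemma crownLabel_lt_iff {i j : Fin (2 * n)} (h : ¬ crown j i) :
    crownLabel j < crownLabel i ↔ (j : ℕ) + 1 < i := by
  simp only [crown, Fin.ext_iff, val_cyclicSucc, crownLabel, Nat.even_iff] at h ⊢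
  split_ifs at h ⊢ <;> omega

lemma cswap_eq_des {σ : Equiv.Perm (Fin (2 * n))} (hσ : IsCAP σ) :
    cswap σ = des crownLabel (List.ofFn ⇑σ⁻¹) := by
  rw [cswap, des_ofFn, ← Set.ncard_coe_finset]
  congr 1
  ext k
  have hnot (j : Fin (2 * n)) (hj : (j : ℕ) = k + 1) : ¬ crown (σ⁻¹ j) (σ⁻¹ k) := fun h => by
    have hlt := (isCAP_iff σ).1 hσ _ _ h
    rw [Equiv.Perm.inv_def, Equiv.apply_symm_apply, Equiv.apply_symm_apply, Fin.lt_def] at hlt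
    omega
  simp only [CSwapSet, Set.mem_ofPred_eq, coe_filter, mem_univ, true_and]
  constructor
  · rintro ⟨hk, hlt⟩
    have hsucc : (cyclicSucc k : ℕ) = k + 1 := by rw [val_cyclicSucc, if_pos hk]
    exact ⟨cyclicSucc k, hsucc, (crownLabel_lt_iff (hnot _ hsucc)).2 hlt⟩
  · rintro ⟨j, hj, hlt⟩
    have hk : (k : ℕ) + 1 < 2 * n := hj ▸ j.isLt
    obtain rfl : j = cyclicSucc k := Fin.ext (by rw [hj, val_cyclicSucc, if_pos hk])
    exact ⟨hk, (crownLabel_lt_iff (hnot _ hj)).1 hlt⟩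

lemma sum_X_pow_cswap (n : ℕ) :
    ∑ σ : Equiv.Perm (Fin (2 * n)) with IsCAP σ, (X : ℤ[X]) ^ cswap σ =
      descentPoly crown crownLabel (univ : Finset (Fin (2 * n))) := by
  rw [descentPoly, ← sum_perm_eq_sum_linExt fun i h => (crownLabel_lt_of_crown i i h).false]
  exact sum_congr (filter_congr fun σ _ => isCAP_iff σ) fun σ hσ => by
    rw [cswap_eq_des ((isCAP_iff σ).2 (mem_filter.1 hσ).2)]

theorem descentPoly_crown_mem_gammaCone (hn : 1 ≤ n) :
    descentPoly crown (crownLabel : Fin (2 * n) → ℕ) univ ∈ gammaCone (2 * n - 2) := by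
  have hne : (univ : Finset (Fin (2 * n))).Nonempty := ⟨⟨0, by omega⟩, mem_univ _⟩
  have h := descentPoly_mem_gammaCone_of_two_levels crownLabel_injective crownLabel_lt_of_crown
    not_odd_and_odd_of_crown hne
    (fun i _ hi => ⟨cyclicSucc i, mem_univ _, Nat.not_odd_iff_even.1 hi, Or.inl rfl⟩)
    (fun j _ hj => ⟨cyclicSucc j, mem_univ _, (even_cyclicSucc j).2 hj, Or.inr rfl⟩)
  rwa [card_univ, Fintype.card_fin] at h

end Crown

end CrownPoset

open Polynomial in
open Classical in
/-- Theorem 5.25 (γ-nonnegativity): there are nonnegative integers `γ_j` with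
`Σ_{σ ∈ CA_{2n}} t^{cswap(σ)} = Σ_{j=0}^{n−1} γ_j t^j (1+t)^{2n−2−2j}`. -/
theorem hstar_gamma_nonneg (n : ℕ) (hn : 1 ≤ n) :
    ∃ γ : ℕ → ℕ,
      ∑ σ ∈ Finset.univ.filter (fun σ : Equiv.Perm (Fin (2 * n)) => IsCAP σ),
          (X : Polynomial ℤ) ^ cswap σ
        = ∑ j ∈ Finset.range n, (γ j : Polynomial ℤ) * X ^ j * (1 + X) ^ (2 * n - 2 - 2 * j) := by
  have hlength : (2 * n - 2) / 2 + 1 = n := by omega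
  obtain ⟨γ, hγ⟩ := CrownPoset.exists_gamma_of_mem_gammaCone
    (CrownPoset.descentPoly_crown_mem_gammaCone hn)
  exact ⟨γ, by rw [CrownPoset.sum_X_pow_cswap, hγ, hlength]⟩
end

section
/- Let n ≥ 2. Let p ∈ ℚ[t] be the order polynomial of the crown poset C_{2n} (the unique polynomial with p(m) = Ω_{C_{2n}}(m) for all integers m ≥ 1) and for each odd k ≥ 1 let q_k ∈ ℚ[t] be the order polynomial of the zigzag poset Z_k. Then the following identity holds in ℚ[t]: p(t) = p(−t) − n · q_{2n−1}(−t) + t · q_{2n−3}(t) − Σ_{1 ≤ i < j ≤ n, (i,j) ≠ (1,n)} q_{2(n−j+i)−1}(−t) · q_{2(j−i)−1}(t). -/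
/-- Cover relations of the crown poset `C_{2n}` on `{1,…,2n}`:
`2i−1 ≺ 2i` for `1 ≤ i ≤ n`, `2i+1 ≺ 2i` for `1 ≤ i ≤ n−1`, and `1 ≺ 2n`. -/
def crownCover (n x y : ℕ) : Prop :=
  Odd x ∧ Even y ∧ (y = x + 1 ∨ x = y + 1 ∨ (x = 1 ∧ y = 2 * n))

/-- The order relation of the crown poset `C_{2n}` (restricted to `{1,…,2n}`). -/
def crownLe (n x y : ℕ) : Prop := x = y ∨ crownCover n x y

/-- The ground set `{1,…,2n}` of the crown poset. -/
def crownGround (n : ℕ) : Finset ℕ := Finset.Icc 1 (2 * n)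

/-- Cover relations of the zigzag poset: `2i−1 ≺ 2i` and `2i+1 ≺ 2i`. -/
def zigCover (x y : ℕ) : Prop :=
  Odd x ∧ Even y ∧ (y = x + 1 ∨ x = y + 1)

/-- The order relation of the zigzag poset `Z_k` (restricted to `{1,…,k}`). -/
def zigLe (x y : ℕ) : Prop := x = y ∨ zigCover x y

/-- The number of order-preserving maps from the poset with ground set `s` and
order relation `le` to the chain `{1,…,m}` (a map is recorded as a function
`ℕ → ℕ` vanishing outside `s`). -/
noncomputable def omegaOn (s : Finset ℕ) (le : ℕ → ℕ → Prop) (m : ℕ) : ℕ :=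
  Set.ncard {f : ℕ → ℕ |
    (∀ x, x ∉ s → f x = 0) ∧ (∀ x ∈ s, f x ∈ Finset.Icc 1 m) ∧
    ∀ x ∈ s, ∀ y ∈ s, le x y → f x ≤ f y}

/-- The order polynomial value `Ω_{C_{2n}}(m)`. -/
noncomputable def omegaCrown (n m : ℕ) : ℕ := omegaOn (crownGround n) (crownLe n) m

/-- The order polynomial value `Ω_{Z_k}(m)`. -/
noncomputable def omegaZig (k m : ℕ) : ℕ := omegaOn (Finset.Icc 1 k) zigLe m

/-!
Let `M_m` be the `m × m` matrix that counts the fillings `a ≤ c ≥ b` of two consecutive covers. By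
the transfer-matrix method, `Ω_{Z_{2k+1}}(m)` is the sum of the entries of `M_m ^ k`, and
`Ω_{C_{2n}}(m)` is the trace of `M_m ^ n`. Up to a zero row and column, `M_{m+1}` is `M_m` plus the
all-ones matrix `J`, so `1 - x M_{m+1}` is a rank-one update of `1 - x M_m`. The formula for the
inverse of a rank-one update turns this into recurrences in `m` for the generating functions
`Z_m = 1 + ∑ k ≥ 1, Ω_{Z_{2k-1}}(m) x ^ k` and `T_m = ∑ n, tr (M_m ^ n) x ^ n`:

  `Z_{m+1} (2 - x - Z_m) = 1` and `Z_{m+1} (T_{m+1} - T_m - 1) = x ∂_x Z_{m+1}`.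

Polynomials in `m` satisfy the first one for every `t`, which yields `Z_0 = 1` and
`Z_{-t} Z_t = 1`. The second one therefore says that the differences of the order polynomial `p` of
the crown are coefficients of `H_t = x (∂_x Z_t) Z_{-t}`, and differentiating `Z_{-t} Z_t = 1` shows
that `H_t` is odd in `t`. Hence `p(t) - p(-t)` is the coefficient of `x ^ n` in `H_t = -H_{-t}`,
which is the asserted sum.
-/

section OrderPreservingMaps

/-- The map on `{1,…,N}`, extended by `0` to `ℕ`, that corresponds to `f` when both `Fin N` and
`Fin m` are identified with `{1,…,N}` and `{1,…,m}`. -/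
def extendByZero {N m : ℕ} (f : Fin N → Fin m) (x : ℕ) : ℕ :=
  if h : x ∈ Finset.Icc 1 N then
    f ⟨x - 1, by rw [Finset.mem_Icc] at h; lia⟩ + 1
  else 0

theorem extendByZero_val_add_one {N m : ℕ} (f : Fin N → Fin m) (i : Fin N) :
    extendByZero f (i + 1) = f i + 1 := by
  simp [extendByZero]

theorem extendByZero_of_notMem {N m : ℕ} (f : Fin N → Fin m) {x : ℕ}
    (hx : x ∉ Finset.Icc 1 N) : extendByZero f x = 0 :=
  dif_neg hx

theorem extendByZero_injective {N m : ℕ} :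
    Function.Injective (extendByZero : (Fin N → Fin m) → ℕ → ℕ) := by
  intro f g hfg
  ext i
  simpa [extendByZero_val_add_one] using congrFun hfg (i + 1)

theorem exists_fin_val_add_one_eq {N x : ℕ} (hx : x ∈ Finset.Icc 1 N) :
    ∃ i : Fin N, (i + 1 : ℕ) = x := by
  rw [Finset.mem_Icc] at hx
  exact ⟨⟨x - 1, by lia⟩, Nat.sub_add_cancel hx.1⟩

theorem exists_extendByZero_eq {N m : ℕ} {g : ℕ → ℕ} (hzero : ∀ x, x ∉ Finset.Icc 1 N → g x = 0)
    (hrange : ∀ x ∈ Finset.Icc 1 N, g x ∈ Finset.Icc 1 m) :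
    ∃ f : Fin N → Fin m, extendByZero f = g := by
  have hval (i : Fin N) : ∃ a : Fin m, (a + 1 : ℕ) = g (i + 1) :=
    exists_fin_val_add_one_eq (hrange _ (by simp))
  choose f hf using hval
  refine ⟨f, funext fun x ↦ ?_⟩
  by_cases hx : x ∈ Finset.Icc 1 N
  · obtain ⟨i, rfl⟩ := exists_fin_val_add_one_eq hx
    rw [extendByZero_val_add_one, hf]
  · rw [extendByZero_of_notMem f hx, hzero x hx]

theorem omegaOn_Icc (N m : ℕ) (le : ℕ → ℕ → Prop) :
    omegaOn (Finset.Icc 1 N) le m =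
      {f : Fin N → Fin m | ∀ i j : Fin N, le (i + 1) (j + 1) → f i ≤ f j}.ncard := by
  rw [omegaOn, ← Set.ncard_image_of_injective _ extendByZero_injective]
  congr 1
  ext g
  constructor
  · rintro ⟨hzero, hrange, hmono⟩
    obtain ⟨f, rfl⟩ := exists_extendByZero_eq hzero hrange
    refine ⟨f, fun i j hij ↦ ?_, rfl⟩
    simpa [extendByZero_val_add_one] using hmono (i + 1) (by simp) (j + 1) (by simp) hij
  · rintro ⟨f, hf, rfl⟩
    refine ⟨fun x ↦ extendByZero_of_notMem f, fun x hx ↦ ?_, fun x hx y hy hxy ↦ ?_⟩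
    · obtain ⟨i, rfl⟩ := exists_fin_val_add_one_eq hx
      simp [extendByZero_val_add_one]
    · obtain ⟨i, rfl⟩ := exists_fin_val_add_one_eq hx
      obtain ⟨j, rfl⟩ := exists_fin_val_add_one_eq hy
      simpa [extendByZero_val_add_one] using hf i j hxy

/-- The relation between the values `a` and `b` of an order-preserving map at the elements `j + 1`
and `j + 2` of a zigzag. -/
def ZigzagStep {α : Type*} [LE α] (j : ℕ) (a b : α) : Prop :=
  if Even j then a ≤ b else b ≤ a

instance {α : Type*} [LE α] [DecidableLE α] (j : ℕ) (a b : α) : Decidable (ZigzagStep j a b) :=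
  inferInstanceAs (Decidable (if Even j then a ≤ b else b ≤ a))

variable {α : Type*} [Preorder α] {k : ℕ}

theorem forall_zigLe_iff_zigzagStep (f : Fin (k + 1) → α) :
    (∀ i j : Fin (k + 1), zigLe (i + 1) (j + 1) → f i ≤ f j) ↔
      ∀ j : Fin k, ZigzagStep j (f j.castSucc) (f j.succ) := by
  constructor
  · intro h j
    unfold ZigzagStep
    split_ifs with hj
    · exact h _ _ (.inr ⟨hj.add_one, hj.add even_two, .inl rfl⟩)
    · rw [Nat.not_even_iff_odd] at hj
      exact h _ _ (.inr ⟨hj.add_even even_two, hj.add_one, .inr rfl⟩)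
  · rintro h i j (hij | ⟨hi, hj, hij | hij⟩)
    · rw [Fin.ext (Nat.succ_injective hij)]
    · obtain ⟨l, rfl, rfl⟩ : ∃ l : Fin k, i = l.castSucc ∧ j = l.succ :=
        ⟨⟨i, by lia⟩, rfl, by ext; simpa using hij⟩
      have hl : Even (l : ℕ) := by simpa [Nat.odd_add_one] using hi
      simpa only [ZigzagStep, if_pos hl] using h l
    · obtain ⟨l, rfl, rfl⟩ : ∃ l : Fin k, j = l.castSucc ∧ i = l.succ :=
        ⟨⟨j, by lia⟩, rfl, by ext; simpa using hij⟩
      have hl : ¬ Even (l : ℕ) := by simpa [Nat.even_add_one] using hj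
      simpa only [ZigzagStep, if_neg hl] using h l

theorem forall_crownLe_iff (f : Fin (2 * k + 2) → α) :
    (∀ i j : Fin (2 * k + 2), crownLe (k + 1) (i + 1) (j + 1) → f i ≤ f j) ↔
      (∀ i j : Fin (2 * k + 2), zigLe (i + 1) (j + 1) → f i ≤ f j) ∧ f 0 ≤ f (Fin.last _) := by
  constructor
  · refine fun h ↦ ⟨fun i j hij ↦ h i j ?_, h _ _ (.inr ⟨?_, ?_, .inr (.inr ⟨?_, ?_⟩)⟩)⟩
    · exact hij.imp_right fun ⟨hi, hj, hij⟩ ↦ ⟨hi, hj, hij.imp_right .inl⟩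
    · simp
    · exact ⟨k + 1, by rw [Fin.val_last]; ring⟩
    · simp
    · rw [Fin.val_last]; ring
  · rintro ⟨hzig, hlast⟩ i j (hij | ⟨hi, hj, hij | hij | ⟨hfirst, hlast'⟩⟩)
    · exact hzig i j (.inl hij)
    · exact hzig i j (.inr ⟨hi, hj, .inl hij⟩)
    · exact hzig i j (.inr ⟨hi, hj, .inr hij⟩)
    · obtain rfl : i = 0 := by ext; simpa using hfirst
      obtain rfl : j = Fin.last _ := by ext; simp only [Fin.val_last]; lia
      exact hlast

end OrderPreservingMaps

section TransferMatrix

open scoped Matrix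

theorem natCast_ncard_setOf {β R : Type*} [Fintype β] [NonAssocSemiring R] (P : β → Prop)
    [DecidablePred P] : ({x | P x}.ncard : R) = ∑ x, if P x then 1 else 0 := by
  rw [Set.ncard_eq_toFinset_card', Set.toFinset_ofPred, Finset.natCast_card_filter]

theorem sum_prod_mul_eq_sum_list_prod {α R : Type*} [Fintype α] [DecidableEq α] [CommSemiring R]
    (A : ℕ → Matrix α α R) (w : α → α → R) (k : ℕ) :
    ∑ f : Fin (k + 1) → α, (∏ j : Fin k, A j (f j.castSucc) (f j.succ)) * w (f 0) (f (Fin.last k)) =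
      ∑ a, ∑ b, ((List.range k).map A).prod a b * w a b := by
  induction k generalizing w with
  | zero =>
    rw [← (Equiv.funUnique (Fin 1) α).symm.sum_comp]
    simp [Matrix.one_apply]
  | succ k ih =>
    rw [← (Fin.snocEquiv fun _ ↦ α).sum_comp, Fintype.sum_prod_type_right]
    calc
      _ = ∑ f : Fin (k + 1) → α, (∏ j : Fin k, A j (f j.castSucc) (f j.succ)) *
            ∑ c, A k (f (Fin.last k)) c * w (f 0) c := by
        refine Finset.sum_congr rfl fun f _ ↦ ?_
        rw [Finset.mul_sum]
        refine Finset.sum_congr rfl fun c _ ↦ ?_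
        have hzero : (Fin.snoc f c : Fin (k + 2) → α) 0 = f 0 :=
          Fin.snoc_apply_zero (α := fun _ ↦ α) c f
        simp only [Fin.snocEquiv_apply, Fin.prod_univ_castSucc, Fin.succ_castSucc, Fin.succ_last,
          Fin.snoc_castSucc, Fin.snoc_last, hzero, Fin.val_castSucc, Fin.val_last, mul_assoc]
      _ = ∑ a, ∑ b, ((List.range k).map A).prod a b * ∑ c, A k b c * w a c :=
        ih fun a b ↦ ∑ c, A k b c * w a c
      _ = ∑ a, ∑ c, ((List.range (k + 1)).map A).prod a c * w a c := by
        refine Finset.sum_congr rfl fun a _ ↦ ?_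
        simp only [List.range_succ, List.map_append, List.prod_append, List.map_singleton,
          List.prod_singleton, Matrix.mul_apply, Finset.mul_sum, Finset.sum_mul, mul_assoc]
        exact Finset.sum_comm

variable (R : Type*) [CommSemiring R]

/-- The zeta matrix of the chain with `m` elements. -/
def chainZeta (m : ℕ) : Matrix (Fin m) (Fin m) R :=
  .of fun a b ↦ if a ≤ b then 1 else 0

/-- The transfer matrix for two consecutive cover relations `a ≤ c ≥ b` of a zigzag: its entry at
`(a, b)` is the number of possible values `c` of the element in the middle. -/
def transferMatrix (m : ℕ) : Matrix (Fin m) (Fin m) R :=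
  chainZeta R m * (chainZeta R m)ᵀ

/-- The indicator matrix of `ZigzagStep j` on a chain with `m` elements. -/
def stepMatrix (m j : ℕ) : Matrix (Fin m) (Fin m) R :=
  .of fun a b ↦ if ZigzagStep j a b then 1 else 0

theorem stepMatrix_of_even {m j : ℕ} (hj : Even j) : stepMatrix R m j = chainZeta R m := by
  ext a b
  simp [stepMatrix, ZigzagStep, chainZeta, hj]

theorem stepMatrix_of_not_even {m j : ℕ} (hj : ¬ Even j) :
    stepMatrix R m j = (chainZeta R m)ᵀ := by
  ext a b
  simp [stepMatrix, ZigzagStep, chainZeta, hj]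

theorem list_prod_stepMatrix_two_mul (m k : ℕ) :
    ((List.range (2 * k)).map (stepMatrix R m)).prod = transferMatrix R m ^ k := by
  induction k with
  | zero => simp
  | succ k ih =>
    rw [show 2 * (k + 1) = 2 * k + 1 + 1 by ring, List.range_succ, List.range_succ]
    simp [ih, stepMatrix_of_even, stepMatrix_of_not_even, pow_succ, transferMatrix]

theorem list_prod_stepMatrix_two_mul_add_one (m k : ℕ) :
    ((List.range (2 * k + 1)).map (stepMatrix R m)).prod =
      transferMatrix R m ^ k * chainZeta R m := by
  simp [List.range_succ, list_prod_stepMatrix_two_mul, stepMatrix_of_even]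

theorem prod_stepMatrix_apply {m k : ℕ} (f : Fin (k + 1) → Fin m) :
    ∏ j : Fin k, stepMatrix R m j (f j.castSucc) (f j.succ) =
      if ∀ j : Fin k, ZigzagStep j (f j.castSucc) (f j.succ) then 1 else 0 := by
  simp only [stepMatrix, Matrix.of_apply, Fintype.prod_ite_zero, Finset.prod_const_one]

theorem omegaZig_two_mul_add_one (k m : ℕ) :
    (omegaZig (2 * k + 1) m : R) = ∑ a, ∑ b, (transferMatrix R m ^ k) a b := by
  simp only [omegaZig, omegaOn_Icc, forall_zigLe_iff_zigzagStep, natCast_ncard_setOf,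
    ← prod_stepMatrix_apply R]
  simpa [list_prod_stepMatrix_two_mul] using
    sum_prod_mul_eq_sum_list_prod (stepMatrix R m) (fun _ _ ↦ 1) (2 * k)

theorem omegaCrown_add_one (k m : ℕ) :
    (omegaCrown (k + 1) m : R) = (transferMatrix R m ^ (k + 1)).trace := by
  have hcount : (omegaCrown (k + 1) m : R) = ∑ f : Fin (2 * k + 1 + 1) → Fin m,
      (∏ j : Fin (2 * k + 1), stepMatrix R m j (f j.castSucc) (f j.succ)) *
        chainZeta R m (f 0) (f (Fin.last _)) := by
    simp only [omegaCrown, crownGround, mul_add_one, omegaOn_Icc, forall_crownLe_iff,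
      forall_zigLe_iff_zigzagStep, natCast_ncard_setOf, prod_stepMatrix_apply, chainZeta,
      Matrix.of_apply, ite_zero_mul_ite_zero, mul_one]
  rw [hcount, sum_prod_mul_eq_sum_list_prod (stepMatrix R m) (chainZeta R m),
    list_prod_stepMatrix_two_mul_add_one, pow_succ, transferMatrix, ← mul_assoc, Matrix.trace]
  simp only [Matrix.diag_apply, Matrix.mul_apply (N := (chainZeta R m)ᵀ), Matrix.transpose_apply]

end TransferMatrix

section RankOneUpdate

open Matrix

variable {ι R : Type*} [Fintype ι] [DecidableEq ι] [CommRing R] {A B : Matrix ι ι R} {u v : ι → R}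

theorem inv_sub_inv_of_sub_eq_vecMulVec (hA : IsUnit A) (hB : IsUnit B)
    (h : B - A = vecMulVec u v) : A⁻¹ - B⁻¹ = vecMulVec (A⁻¹ *ᵥ u) (v ᵥ* B⁻¹) := by
  rw [inv_sub_inv (iff_of_true hA hB), h, mul_vecMulVec, vecMulVec_mul]

theorem one_add_mul_one_sub_dotProduct_inv (hA : IsUnit A) (hB : IsUnit B)
    (h : B - A = vecMulVec u v) : (1 + v ⬝ᵥ A⁻¹ *ᵥ u) * (1 - v ⬝ᵥ B⁻¹ *ᵥ u) = 1 := by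
  have hinv := congrArg (fun M ↦ v ⬝ᵥ M *ᵥ u) (inv_sub_inv_of_sub_eq_vecMulVec hA hB h)
  simp only [sub_mulVec, dotProduct_sub, vecMulVec_mulVec, ← dotProduct_mulVec,
    op_smul_eq_smul, dotProduct_smul, smul_eq_mul] at hinv
  linear_combination hinv

theorem one_add_mul_trace_inv_sub_trace_inv (hA : IsUnit A) (hB : IsUnit B)
    (h : B - A = vecMulVec u v) :
    (1 + v ⬝ᵥ A⁻¹ *ᵥ u) * (trace A⁻¹ - trace B⁻¹) = v ⬝ᵥ (A⁻¹ * A⁻¹) *ᵥ u := by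
  have hinv := inv_sub_inv_of_sub_eq_vecMulVec hA hB h
  have htrace : trace A⁻¹ - trace B⁻¹ = v ⬝ᵥ (B⁻¹ * A⁻¹) *ᵥ u := by
    rw [← trace_sub, hinv, trace_vecMulVec, dotProduct_comm, ← dotProduct_mulVec, mulVec_mulVec]
  have hsquare : v ⬝ᵥ (A⁻¹ * A⁻¹) *ᵥ u - v ⬝ᵥ (B⁻¹ * A⁻¹) *ᵥ u =
      (v ⬝ᵥ A⁻¹ *ᵥ u) * v ⬝ᵥ (B⁻¹ * A⁻¹) *ᵥ u := by
    rw [← dotProduct_sub, ← sub_mulVec, ← sub_mul, hinv, vecMulVec_mul, vecMulVec_mulVec,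
      vecMul_vecMul, ← dotProduct_mulVec, op_smul_eq_smul, dotProduct_smul, smul_eq_mul, mul_comm]
  rw [htrace]
  linear_combination -hsquare

end RankOneUpdate

section GeometricSeries

open Matrix PowerSeries Finset.HasAntidiagonal

variable {ι κ R : Type*} [DecidableEq ι] [CommRing R]

theorem one_sub_X_smul_sub_one_sub_X_smul_add (M : Matrix ι ι R) :
    (1 - (X : R⟦X⟧) • M.map C) - (1 - (X : R⟦X⟧) • (M + vecMulVec 1 1).map C) =
      vecMulVec ((X : R⟦X⟧) • 1) 1 := by
  ext i j : 1
  simp [vecMulVec_apply, mul_add]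

variable [Fintype ι] [Fintype κ] [DecidableEq κ]

/-- The matrix `∑ k, X ^ k • M ^ k` of power series. -/
def geomSeries (M : Matrix ι ι R) : Matrix ι ι R⟦X⟧ :=
  .of fun i j ↦ .mk fun k ↦ (M ^ k) i j

theorem one_sub_X_smul_mul_geomSeries (M : Matrix ι ι R) :
    (1 - (X : R⟦X⟧) • M.map C) * geomSeries M = 1 := by
  ext i j k
  rw [sub_mul, one_mul, smul_mul_assoc]
  cases k with
  | zero => by_cases h : i = j <;> simp [geomSeries, one_apply, h]
  | succ k =>
    by_cases h : i = j <;>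
    simp [geomSeries, coeff_succ_X_mul, mul_apply, pow_succ', one_apply, coeff_one,h]

theorem isUnit_one_sub_X_smul (M : Matrix ι ι R) : IsUnit (1 - (X : R⟦X⟧) • M.map C) :=
  .of_mul_eq_one _ (one_sub_X_smul_mul_geomSeries M)

theorem inv_one_sub_X_smul (M : Matrix ι ι R) :
    (1 - (X : R⟦X⟧) • M.map C)⁻¹ = geomSeries M :=
  inv_eq_right_inv (one_sub_X_smul_mul_geomSeries M)

/-- The generating function of the sums of all entries of the powers of `M`. -/
def entrySumSeries (M : Matrix ι ι R) : R⟦X⟧ :=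
  .mk fun k ↦ ∑ i, ∑ j, (M ^ k) i j

/-- The generating function of the traces of the powers of `M`. -/
def traceSeries (M : Matrix ι ι R) : R⟦X⟧ :=
  .mk fun k ↦ trace (M ^ k)

theorem trace_geomSeries (M : Matrix ι ι R) : trace (geomSeries M) = traceSeries M := by
  ext k
  simp [trace, traceSeries, geomSeries]

theorem one_dotProduct_geomSeries_mulVec_one (M : Matrix ι ι R) :
    1 ⬝ᵥ geomSeries M *ᵥ 1 = entrySumSeries M := by
  ext k
  simp [entrySumSeries, geomSeries, dotProduct, mulVec]

theorem coeff_geomSeries_mul_self (M : Matrix ι ι R) (k : ℕ) (i j : ι) :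
    coeff k ((geomSeries M * geomSeries M) i j) = (M ^ k) i j * (k + 1) := by
  calc
    _ = ∑ l, ∑ x ∈ antidiagonal k, (M ^ x.1) i l * (M ^ x.2) l j := by
      simp [mul_apply, geomSeries, coeff_mul]
    _ = ∑ x ∈ antidiagonal k, (M ^ (x.1 + x.2)) i j := by
      simp only [pow_add, mul_apply]
      exact Finset.sum_comm
    _ = (M ^ k) i j * (k + 1) := by
      rw [Finset.sum_congr rfl fun x hx ↦ by rw [mem_antidiagonal.1 hx]]
      simp [mul_comm]

theorem one_dotProduct_geomSeries_mul_self_mulVec_one (M : Matrix ι ι R) :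
    1 ⬝ᵥ (geomSeries M * geomSeries M) *ᵥ 1 = d⁄dX R (X * entrySumSeries M) := by
  ext k
  rw [coeff_derivative, coeff_succ_X_mul]
  simp [dotProduct, mulVec, coeff_geomSeries_mul_self, entrySumSeries, Finset.sum_mul]

theorem one_add_mul_one_sub_entrySumSeries (M : Matrix ι ι R) :
    (1 + X * entrySumSeries (M + vecMulVec 1 1)) * (1 - X * entrySumSeries M) = 1 := by
  have h := one_add_mul_one_sub_dotProduct_inv (R := R⟦X⟧) (u := (X : R⟦X⟧) • 1) (v := 1)
    (isUnit_one_sub_X_smul (M + vecMulVec 1 1)) (isUnit_one_sub_X_smul M)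
    (one_sub_X_smul_sub_one_sub_X_smul_add M)
  simpa only [inv_one_sub_X_smul, mulVec_smul, dotProduct_smul, smul_eq_mul,
    one_dotProduct_geomSeries_mulVec_one] using h

theorem one_add_mul_traceSeries_sub (M : Matrix ι ι R) :
    (1 + X * entrySumSeries (M + vecMulVec 1 1)) *
        (traceSeries (M + vecMulVec 1 1) - traceSeries M) =
      X * d⁄dX R (1 + X * entrySumSeries (M + vecMulVec 1 1)) := by
  have h := one_add_mul_trace_inv_sub_trace_inv (R := R⟦X⟧) (u := (X : R⟦X⟧) • 1) (v := 1)
    (isUnit_one_sub_X_smul (M + vecMulVec 1 1)) (isUnit_one_sub_X_smul M)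
    (one_sub_X_smul_sub_one_sub_X_smul_add M)
  simpa only [inv_one_sub_X_smul, mulVec_smul, dotProduct_smul, smul_eq_mul, trace_geomSeries,
    one_dotProduct_geomSeries_mulVec_one, one_dotProduct_geomSeries_mul_self_mulVec_one, map_add,
    derivative_one, zero_add] using h

theorem entrySumSeries_fromBlocks (M : Matrix ι ι R) (N : Matrix κ κ R) :
    entrySumSeries (fromBlocks M 0 0 N) = entrySumSeries M + entrySumSeries N := by
  ext k
  simp [entrySumSeries, fromBlocks_diagonal_pow]

theorem traceSeries_fromBlocks (M : Matrix ι ι R) (N : Matrix κ κ R) :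
    traceSeries (fromBlocks M 0 0 N) = traceSeries M + traceSeries N := by
  ext k
  simp [traceSeries, fromBlocks_diagonal_pow, trace]

theorem entrySumSeries_zero : entrySumSeries (0 : Matrix ι ι R) = C (Fintype.card ι : R) := by
  ext (_ | k) <;> simp [entrySumSeries, one_apply, coeff_C, -map_natCast]

theorem traceSeries_zero : traceSeries (0 : Matrix ι ι R) = C (Fintype.card ι : R) := by
  ext (_ | k) <;> simp [traceSeries, coeff_C, -map_natCast]

theorem entrySumSeries_reindex (e : ι ≃ κ) (M : Matrix ι ι R) :
    entrySumSeries (reindex e e M) = entrySumSeries M := by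
  ext k
  rw [entrySumSeries, ← coe_reindexAlgEquiv R R]
  simp only [← map_pow]
  simp [entrySumSeries, ← e.symm.sum_comp]

theorem traceSeries_reindex (e : ι ≃ κ) (M : Matrix ι ι R) :
    traceSeries (reindex e e M) = traceSeries M := by
  ext k
  rw [traceSeries, ← coe_reindexAlgEquiv R R]
  simp only [← map_pow]
  simp [traceSeries, trace, ← e.symm.sum_comp]

end GeometricSeries

section ZigzagSeries

open Matrix PowerSeries

variable (R : Type*) [CommRing R]

theorem transferMatrix_apply {m : ℕ} (a b : Fin m) :
    transferMatrix R m a b = (m - max a b : ℕ) := by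
  calc
    _ = ∑ c, if max a b ≤ c then 1 else 0 := by
      simp [transferMatrix, chainZeta, mul_apply, ← ite_and, and_comm]
    _ = ((Finset.Ici (max a b)).card : R) := by
      rw [← Finset.natCast_card_filter, Finset.filter_le_eq_Ici]
    _ = (m - max a b : ℕ) := by simp

theorem transferMatrix_add_one (m : ℕ) :
    transferMatrix R (m + 1) =
      reindex finSumFinEquiv finSumFinEquiv
        (fromBlocks (transferMatrix R m) 0 0 (0 : Matrix (Fin 1) (Fin 1) R)) + vecMulVec 1 1 := by
  ext a b
  induction a using Fin.lastCases with
  | last =>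
    induction b using Fin.lastCases <;> simp [transferMatrix_apply]
  | cast a =>
    induction b using Fin.lastCases with
    | last => simp [transferMatrix_apply]
    | cast b =>
      have hle : max (a : ℕ) b ≤ m := by lia
      simp [transferMatrix_apply, Nat.succ_sub hle, hle]

/-- The generating function of the numbers `Ω_{Z_{2k-1}}(m)`, with constant coefficient `1`
standing for the empty zigzag. -/
noncomputable def zigzagSeries (m : ℕ) : R⟦X⟧ := 1 + X * entrySumSeries (transferMatrix R m)

theorem zigzagSeries_zero : zigzagSeries R 0 = 1 := by
  ext (_ | k) <;> simp [zigzagSeries, entrySumSeries, coeff_succ_X_mul]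

theorem coeff_add_one_zigzagSeries (m k : ℕ) :
    coeff (k + 1) (zigzagSeries R m) = omegaZig (2 * k + 1) m := by
  simp [zigzagSeries, entrySumSeries, coeff_succ_X_mul, omegaZig_two_mul_add_one, coeff_one]

theorem coeff_add_one_traceSeries_transferMatrix (m k : ℕ) :
    coeff (k + 1) (traceSeries (transferMatrix R m)) = omegaCrown (k + 1) m := by
  rw [traceSeries, coeff_mk, omegaCrown_add_one]

theorem zigzagSeries_add_one_mul (m : ℕ) :
    zigzagSeries R (m + 1) * (2 - X - zigzagSeries R m) = 1 := by
  have h := one_add_mul_one_sub_entrySumSeries <| reindex finSumFinEquiv finSumFinEquiv <|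
    fromBlocks (transferMatrix R m) 0 0 (0 : Matrix (Fin 1) (Fin 1) R)
  rw [← transferMatrix_add_one, entrySumSeries_reindex, entrySumSeries_fromBlocks,
    entrySumSeries_zero, Fintype.card_fin, Nat.cast_one, map_one] at h
  rw [← h, zigzagSeries, zigzagSeries]
  ring

theorem zigzagSeries_add_one_mul_traceSeries_sub (m : ℕ) :
    zigzagSeries R (m + 1) *
        (traceSeries (transferMatrix R (m + 1)) - traceSeries (transferMatrix R m) - 1) =
      X * d⁄dX R (zigzagSeries R (m + 1)) := by
  have h := one_add_mul_traceSeries_sub <| reindex finSumFinEquiv finSumFinEquiv <|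
    fromBlocks (transferMatrix R m) 0 0 (0 : Matrix (Fin 1) (Fin 1) R)
  rw [← transferMatrix_add_one, traceSeries_reindex, traceSeries_fromBlocks,
    traceSeries_zero, Fintype.card_fin, Nat.cast_one, map_one, ← sub_sub] at h
  exact h

end ZigzagSeries

section PolynomialIdentities

open PowerSeries (map coeff)
open Polynomial (evalRingHom compRingHom)
open scoped Polynomial PowerSeries

theorem polynomial_eq_of_eval_natCast {R : Type*} [CommRing R] [IsDomain R] [CharZero R]
    {p q : R[X]} (N : ℕ) (h : ∀ m : ℕ, N ≤ m → p.eval (m : R) = q.eval (m : R)) : p = q := by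
  refine Polynomial.eq_of_infinite_eval_eq p q <| .mono ?_ <|
    (Set.Ici_infinite N).image (Nat.cast_injective (R := R)).injOn
  rintro _ ⟨m, hm, rfl⟩
  exact h m hm

theorem powerSeries_eq_of_map_evalRingHom_natCast {R : Type*} [CommRing R] [IsDomain R]
    [CharZero R] {F G : R[X]⟦X⟧} (N : ℕ)
    (h : ∀ m : ℕ, N ≤ m → map (evalRingHom (m : R)) F = map (evalRingHom (m : R)) G) :
    F = G := by
  ext1 k
  refine polynomial_eq_of_eval_natCast N fun m hm ↦ ?_
  simpa using congrArg (coeff k) (h m hm)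

variable {R : Type*} [CommRing R]

theorem map_evalRingHom_map_compRingHom (z : R) (r : R[X]) (F : R[X]⟦X⟧) :
    map (evalRingHom z) (map (compRingHom r) F) = map (evalRingHom (r.eval z)) F := by
  ext k
  simp [Polynomial.eval_comp]

theorem derivative_powerSeries_map {S : Type*} [CommRing S] (f : R →+* S) (F : R⟦X⟧) :
    d⁄dX S (map f F) = map f (d⁄dX R F) := by
  ext k
  simp [PowerSeries.coeff_derivative]

theorem map_X_mul_derivative_mul_map {σ : R →+* R} (hσ : Function.Involutive σ) {F : R⟦X⟧}
    (hF : map σ F * F = 1) :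
    map σ (PowerSeries.X * d⁄dX R F * map σ F) = -(PowerSeries.X * d⁄dX R F * map σ F) := by
  have hmap : map σ (map σ F) = F := by
    ext k
    simp [hσ _]
  have hderiv := congrArg (d⁄dX R) hF
  rw [Derivation.leibniz, smul_eq_mul, smul_eq_mul, derivative_powerSeries_map,
    PowerSeries.derivative_one] at hderiv
  rw [map_mul, map_mul, PowerSeries.map_X, hmap]
  linear_combination PowerSeries.X * hderiv

theorem compRingHom_neg_X_involutive :
    Function.Involutive (compRingHom (-Polynomial.X : R[X])) := fun p ↦ by
  simp [Polynomial.comp_assoc]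

theorem map_compRingHom_neg_X_mul_self [IsDomain R] [CharZero R] {F : R[X]⟦X⟧}
    (hzero : map (evalRingHom 0) F = 1)
    (hshift : ∀ z, map (evalRingHom (z + 1)) F * (2 - PowerSeries.X - map (evalRingHom z) F) = 1) :
    map (compRingHom (-Polynomial.X)) F * F = 1 := by
  have hinv (m : ℕ) : map (evalRingHom (-m : R)) F * map (evalRingHom (m : R)) F = 1 := by
    induction m with
    | zero => simp [hzero]
    | succ m ih =>
      have hpos := hshift m
      have hneg := hshift (-(m + 1))
      rw [neg_add, neg_add_cancel_right] at hneg
      have hreflect := left_inv_eq_right_inv ((mul_comm _ _).trans hneg) ih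
      rw [Nat.cast_succ, neg_add]
      linear_combination hpos - map (evalRingHom (m + 1 : R)) F * hreflect
  refine powerSeries_eq_of_map_evalRingHom_natCast 0 fun m _ ↦ ?_
  rw [map_mul, map_one, map_evalRingHom_map_compRingHom, Polynomial.eval_neg, Polynomial.eval_X,
    hinv]

theorem sub_comp_neg_X_eq_of_eval_natCast_add_one_sub [IsDomain R] [CharZero R] {p h : R[X]}
    (N : ℕ) (hodd : h.comp (-Polynomial.X) = -h)
    (hdiff : ∀ m : ℕ, N ≤ m → p.eval (m + 1 : R) - p.eval (m : R) = h.eval (m + 1 : R)) :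
    p - p.comp (-Polynomial.X) = h := by
  have hdiff' (z : R) : p.eval (z + 1) - p.eval z = h.eval (z + 1) := by
    have hcomp : p.comp (Polynomial.X + 1) - p = h.comp (Polynomial.X + 1) :=
      polynomial_eq_of_eval_natCast N fun m hm ↦ by simpa [Polynomial.eval_comp] using hdiff m hm
    simpa [Polynomial.eval_comp] using congrArg (Polynomial.eval z) hcomp
  have hodd' (z : R) : h.eval (-z) = -h.eval z := by
    simpa [Polynomial.eval_comp] using congrArg (Polynomial.eval z) hodd
  have hreflect (m : ℕ) : p.eval (-(m + 1) : R) = p.eval (m : R) := by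
    induction m with
    | zero =>
      have h_zero : h.eval 0 = 0 := self_eq_neg.1 (by simpa using hodd' 0)
      simpa [h_zero] using (sub_eq_zero.1 (by simpa [h_zero] using hdiff' (-1))).symm
    | succ m ih =>
      have hneg := hdiff' (-(m + 1 + 1))
      rw [show -(m + 1 + 1 : R) + 1 = -(m + 1) by ring, hodd', ih] at hneg
      push_cast
      linear_combination -hdiff' m - hneg
  refine polynomial_eq_of_eval_natCast 1 fun m hm ↦ ?_
  obtain ⟨m, rfl⟩ := Nat.exists_eq_add_of_le' hm
  rw [Polynomial.eval_sub, Polynomial.eval_comp, Polynomial.eval_neg, Polynomial.eval_X,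
    Nat.cast_succ, hreflect, hdiff']

theorem sum_filter_lt_Icc_sub_add {M : Type*} [AddCommMonoid M] (n : ℕ) (f : ℕ → M) :
    ∑ ij ∈ (Finset.Icc 1 n ×ˢ Finset.Icc 1 n).filter (fun ij ↦ ij.1 < ij.2),
        f (n - ij.2 + ij.1) =
      ∑ e ∈ Finset.range n, e • f e := by
  have hfiber (e : ℕ) : e • f e = ∑ _i ∈ Finset.Icc 1 e, f e := by simp
  rw [Finset.sum_congr rfl fun e _ ↦ hfiber e, Finset.sum_sigma']
  refine Finset.sum_nbij' (fun ij ↦ ⟨n - ij.2 + ij.1, ij.1⟩) (fun s ↦ (s.2, n - s.1 + s.2))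
    ?_ ?_ ?_ ?_ fun _ _ ↦ rfl
  all_goals
    rintro ⟨a, b⟩ h
    simp only [Finset.mem_filter, Finset.mem_product, Finset.mem_sigma, Finset.mem_Icc,
      Finset.mem_range, Sigma.mk.injEq, heq_eq_eq, Prod.mk.injEq, and_true, true_and] at h ⊢
    lia

end PolynomialIdentities

section OrderPolynomials

open PowerSeries (map coeff)
open Polynomial (evalRingHom compRingHom)
open scoped Polynomial PowerSeries

/-- `q k` is the order polynomial of the zigzag poset `Z_k` for every odd `k`, with no condition on
`q k` for even `k`. -/
def IsZigzagOrderPolynomial {R : Type*} [CommRing R] (q : ℕ → R[X]) : Prop :=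
  ∀ k, Odd k → ∀ m : ℕ, 1 ≤ m → (q k).eval (m : R) = omegaZig k m

/-- The generating function of the order polynomials `q (2k-1)` of the zigzags with an odd number
of elements, with constant coefficient `1` standing for the empty zigzag. -/
noncomputable def zigzagPolynomialSeries {R : Type*} [CommRing R] (q : ℕ → R[X]) : R[X]⟦X⟧ :=
  .mk fun k ↦ if k = 0 then 1 else q (2 * k - 1)

variable {R : Type*} [CommRing R] {q : ℕ → R[X]}

theorem coeff_zero_zigzagPolynomialSeries : coeff 0 (zigzagPolynomialSeries q) = 1 := by
  simp [zigzagPolynomialSeries]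

theorem coeff_zigzagPolynomialSeries {k : ℕ} (hk : k ≠ 0) :
    coeff k (zigzagPolynomialSeries q) = q (2 * k - 1) := by
  simp [zigzagPolynomialSeries, hk]

theorem map_evalRingHom_zigzagPolynomialSeries
    (hq : IsZigzagOrderPolynomial q) {m : ℕ} (hm : 1 ≤ m) :
    map (evalRingHom (m : R)) (zigzagPolynomialSeries q) = zigzagSeries R m := by
  ext (_ | k)
  · simp [zigzagPolynomialSeries, zigzagSeries]
  · rw [coeff_add_one_zigzagSeries, ← hq _ (odd_two_mul_add_one k) m hm]
    simp [zigzagPolynomialSeries, mul_add_one]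

variable [IsDomain R] [CharZero R]

theorem zigzag_one_eq_X (hq : IsZigzagOrderPolynomial q) : q 1 = Polynomial.X := by
  refine polynomial_eq_of_eval_natCast 1 fun m hm ↦ ?_
  rw [hq 1 odd_one m hm, omegaZig_two_mul_add_one R 0 m]
  simp [Matrix.one_apply]

theorem map_evalRingHom_add_one_mul_zigzagPolynomialSeries
    (hq : IsZigzagOrderPolynomial q) (z : R) :
    map (evalRingHom (z + 1)) (zigzagPolynomialSeries q) *
      (2 - PowerSeries.X - map (evalRingHom z) (zigzagPolynomialSeries q)) = 1 := by
  have hcomp : map (compRingHom (Polynomial.X + 1)) (zigzagPolynomialSeries q) *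
      (2 - PowerSeries.X - zigzagPolynomialSeries q) = 1 := by
    refine powerSeries_eq_of_map_evalRingHom_natCast 1 fun m hm ↦ ?_
    simp only [map_mul, map_sub, map_one, map_ofNat, PowerSeries.map_X,
      map_evalRingHom_map_compRingHom, Polynomial.eval_add, Polynomial.eval_X, Polynomial.eval_one]
    rw [← Nat.cast_succ, map_evalRingHom_zigzagPolynomialSeries hq hm,
      map_evalRingHom_zigzagPolynomialSeries hq m.succ_pos]
    exact zigzagSeries_add_one_mul R m
  simpa [map_evalRingHom_map_compRingHom, map_ofNat (map (evalRingHom z)) 2] using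
    congrArg (map (evalRingHom z)) hcomp

theorem map_evalRingHom_zero_zigzagPolynomialSeries (hq : IsZigzagOrderPolynomial q) :
    map (evalRingHom 0) (zigzagPolynomialSeries q) = 1 := by
  have hone : map (evalRingHom (0 + 1)) (zigzagPolynomialSeries q) = zigzagSeries R 1 := by
    simpa using map_evalRingHom_zigzagPolynomialSeries hq le_rfl
  have hshift := map_evalRingHom_add_one_mul_zigzagPolynomialSeries hq 0
  have hcancel := zigzagSeries_add_one_mul R 0
  rw [zero_add, zigzagSeries_zero, mul_comm] at hcancel
  rw [hone] at hshift
  linear_combination left_inv_eq_right_inv hcancel hshift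

theorem map_compRingHom_neg_X_zigzagPolynomialSeries_mul_self
    (hq : IsZigzagOrderPolynomial q) :
    map (compRingHom (-Polynomial.X)) (zigzagPolynomialSeries q) * zigzagPolynomialSeries q = 1 :=
  map_compRingHom_neg_X_mul_self (map_evalRingHom_zero_zigzagPolynomialSeries hq)
    (map_evalRingHom_add_one_mul_zigzagPolynomialSeries hq)

/-- The generating function of the differences `p(t) - p(-t)` for the order polynomials `p` of the
crowns, in terms of the order polynomials `q` of the zigzags. -/
noncomputable def crownReflectionSeries (q : ℕ → R[X]) : R[X]⟦X⟧ :=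
  PowerSeries.X * d⁄dX R[X] (zigzagPolynomialSeries q) *
    map (compRingHom (-Polynomial.X)) (zigzagPolynomialSeries q)

theorem omegaCrown_add_one_sub (hq : IsZigzagOrderPolynomial q) {n m : ℕ} (hn : 1 ≤ n) :
    (omegaCrown n (m + 1) - omegaCrown n m : R) =
      (coeff n (crownReflectionSeries q)).eval (m + 1 : R) := by
  obtain ⟨n, rfl⟩ := Nat.exists_eq_add_of_le' hn
  have hrec := zigzagSeries_add_one_mul_traceSeries_sub R m
  have hinv := congrArg (map (evalRingHom (m + 1 : R)))
    (map_compRingHom_neg_X_zigzagPolynomialSeries_mul_self hq)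
  have heval := map_evalRingHom_zigzagPolynomialSeries hq m.succ_pos
  rw [Nat.cast_succ] at heval
  rw [map_mul, heval, map_one] at hinv
  have hseries : traceSeries (transferMatrix R (m + 1)) - traceSeries (transferMatrix R m) - 1 =
      map (evalRingHom (m + 1 : R)) (crownReflectionSeries q) := by
    rw [crownReflectionSeries, map_mul, map_mul, PowerSeries.map_X, ← derivative_powerSeries_map,
      heval, ← hrec]
    linear_combination -(traceSeries (transferMatrix R (m + 1)) -
      traceSeries (transferMatrix R m) - 1) * hinv
  simpa [coeff_add_one_traceSeries_transferMatrix, PowerSeries.coeff_one] using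
    congrArg (coeff (n + 1)) hseries

theorem coeff_crownReflectionSeries_comp_neg_X (hq : IsZigzagOrderPolynomial q) (n : ℕ) :
    (coeff n (crownReflectionSeries q)).comp (-Polynomial.X) =
      -coeff n (crownReflectionSeries q) := by
  rw [← Polynomial.coe_compRingHom_apply, ← PowerSeries.coeff_map, crownReflectionSeries,
    map_X_mul_derivative_mul_map compRingHom_neg_X_involutive
      (map_compRingHom_neg_X_zigzagPolynomialSeries_mul_self hq), map_neg]

theorem crown_sub_comp_neg_X (hq : IsZigzagOrderPolynomial q) {n : ℕ} (hn : 1 ≤ n) {p : R[X]}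
    (hp : ∀ m : ℕ, 1 ≤ m → p.eval (m : R) = omegaCrown n m) :
    p - p.comp (-Polynomial.X) = coeff n (crownReflectionSeries q) := by
  refine sub_comp_neg_X_eq_of_eval_natCast_add_one_sub 1
    (coeff_crownReflectionSeries_comp_neg_X hq n) fun m hm ↦ ?_
  rw [← omegaCrown_add_one_sub hq hn, ← hp m hm, ← hp _ m.succ_pos, Nat.cast_succ]

theorem coeff_crownReflectionSeries (hq : IsZigzagOrderPolynomial q) (n : ℕ) :
    coeff n (crownReflectionSeries q) =
      -∑ e ∈ Finset.range (n + 1), e •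
        ((coeff e (zigzagPolynomialSeries q)).comp (-Polynomial.X) *
          coeff (n - e) (zigzagPolynomialSeries q)) := by
  have hderiv (k : ℕ) : coeff k (PowerSeries.X * d⁄dX R[X] (zigzagPolynomialSeries q)) =
      k • coeff k (zigzagPolynomialSeries q) := by
    cases k with
    | zero => simp
    | succ k => simp [PowerSeries.coeff_succ_X_mul, PowerSeries.coeff_derivative, mul_comm]
  rw [← neg_eq_iff_eq_neg, ← coeff_crownReflectionSeries_comp_neg_X hq, crownReflectionSeries,
    PowerSeries.coeff_mul, Finset.Nat.sum_antidiagonal_eq_sum_range_succ_mk,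
    ← Polynomial.coe_compRingHom_apply, map_sum]
  refine Finset.sum_congr rfl fun e _ ↦ ?_
  simp [hderiv, Polynomial.comp_assoc, mul_assoc]

theorem sum_zigzag_mul_zigzag_eq_sum_range (hq : IsZigzagOrderPolynomial q) {n : ℕ} (hn : 2 ≤ n) :
    ∑ ij ∈ (Finset.Icc 1 n ×ˢ Finset.Icc 1 n).filter (fun ij ↦ ij.1 < ij.2 ∧ ij ≠ (1, n)),
        (q (2 * (n - ij.2 + ij.1) - 1)).comp (-Polynomial.X) * q (2 * (ij.2 - ij.1) - 1) =
      ∑ e ∈ Finset.range n, e • ((coeff e (zigzagPolynomialSeries q)).comp (-Polynomial.X) *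
        coeff (n - e) (zigzagPolynomialSeries q)) + Polynomial.X * q (2 * n - 3) := by
  have hmem : (1, n) ∈ (Finset.Icc 1 n ×ˢ Finset.Icc 1 n).filter (fun ij ↦ ij.1 < ij.2) := by
    simp only [Finset.mem_filter, Finset.mem_product, Finset.mem_Icc]
    lia
  have hterm : (q (2 * (n - n + 1) - 1)).comp (-Polynomial.X) * q (2 * (n - 1) - 1) =
      -(Polynomial.X * q (2 * n - 3)) := by
    rw [Nat.sub_self, show 2 * (n - 1) - 1 = 2 * n - 3 by lia]
    simp [zigzag_one_eq_X hq]
  rw [← Finset.filter_filter, Finset.filter_ne', Finset.sum_erase_eq_sub hmem, hterm,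
    sub_neg_eq_add, ← sum_filter_lt_Icc_sub_add]
  congr 1
  refine Finset.sum_congr rfl fun ⟨i, j⟩ hij ↦ ?_
  simp only [Finset.mem_filter, Finset.mem_product, Finset.mem_Icc] at hij
  rw [coeff_zigzagPolynomialSeries (by lia), coeff_zigzagPolynomialSeries (by lia),
    show n - (n - j + i) = j - i by lia]

end OrderPolynomials

open Polynomial in
/-- Theorem 4.3, Equation (2): the reciprocity relation
`Ω_{C_{2n}}(t) = Ω_{C_{2n}}(−t) − n·Ω_{Z_{2n−1}}(−t) + t·Ω_{Z_{2n−3}}(t)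
  − Σ_{1 ≤ i < j ≤ n, (i,j) ≠ (1,n)} Ω_{Z_{2(n−j+i)−1}}(−t)·Ω_{Z_{2(j−i)−1}}(t)`
as an identity of polynomials over `ℚ`. -/
theorem crown_order_polynomial_reciprocity (n : ℕ) (hn : 2 ≤ n)
    (p : Polynomial ℚ) (hp : ∀ m : ℕ, 1 ≤ m → p.eval (m : ℚ) = omegaCrown n m)
    (q : ℕ → Polynomial ℚ)
    (hq : ∀ k, Odd k → ∀ m : ℕ, 1 ≤ m → (q k).eval (m : ℚ) = omegaZig k m) :
    p = p.comp (-X) - (n : Polynomial ℚ) * (q (2 * n - 1)).comp (-X)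
        + X * q (2 * n - 3)
        - ∑ ij ∈ (Finset.Icc 1 n ×ˢ Finset.Icc 1 n).filter
            (fun ij => ij.1 < ij.2 ∧ ij ≠ (1, n)),
            (q (2 * (n - ij.2 + ij.1) - 1)).comp (-X) * q (2 * (ij.2 - ij.1) - 1) := by
  have hreflect := crown_sub_comp_neg_X hq (by lia) hp
  rw [coeff_crownReflectionSeries hq, Finset.sum_range_succ, Nat.sub_self,
    coeff_zero_zigzagPolynomialSeries, coeff_zigzagPolynomialSeries (by lia : n ≠ 0), mul_one,
    nsmul_eq_mul] at hreflect
  rw [sum_zigzag_mul_zigzag_eq_sum_range hq hn]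
  linear_combination hreflect
end
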